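/- arXiv:2410.17407 — 2 statements merged into one kernel-verified Lean document; each statement's English description precedes it below -/
import Mathlib

section
/- Let A, B, C be von Neumann algebras, let X be an equivalence A-B-bimodule, and let K be a Morita B-C-correspondence. Then the A-C-correspondence X ⊗_B K (the separation-completion of the algebraic balanced tensor product X ⊙_B K with inner product ⟨x ⊗ ξ, y ⊗ η⟩ = ⟨ξ, π_K(⟨x,y⟩_B) η⟩, with A acting by π_⊠(a)(x ⊗ ξ) = ax ⊗ ξ and C acting by ρ_⊠(c)(x ⊗ ξ) = x ⊗ ρ_K(c)ξ) is a Morita A-C-correspondence, i.e. π_⊠ and ρ_⊠ are faithful and π_⊠(A)' = ρ_⊠(C). -/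
/-!
Common framework for formalizing "Morita theory for dynamical von Neumann algebras".

We work with concrete von Neumann algebras: subsets of `B(H)` for a complex Hilbert
space `H`, which are star-closed and equal to their double commutant.  Since Mathlib
has no σ-weak topology, we use the weak operator topology; recall that on convex sets
(all sets we close are linear subspaces) the WOT closure coincides with the σ-weak
closure, and a linear map between von Neumann algebras is normal iff it is
WOT-continuous on bounded sets.

Since Mathlib has no Hilbert space tensor product, we quantify over a `TensorTheory`:
a package providing, for bundled Hilbert spaces `H, K`, a Hilbert space `T H K`
together with the maps `a ⊗ b` on operators, `ξ ⊗ η` on vectors (with the inner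
product law and density, which pins the structure down uniquely), tensor products of
(normal) maps, slice maps, and the associativity/commutativity/functoriality unitaries.

A locally compact quantum group is encoded via its von Neumann algebra `L^∞(𝔾)`,
the dual algebra `L^∞(𝔾̌)`, the multiplicative unitaries `V, W, V̌` (with the pentagon
equation and the implementation of the coproducts), and the map `x ↦ J̌ x* J̌`
(whose restriction to `L^∞(𝔾)` is the unitary antipode `R`).
-/

noncomputable section

namespace Paper

open Set
open scoped ComplexOrder

notation "⟪" x ", " y "⟫" => (inner ℂ x y : ℂ)

/-- A bundled complex Hilbert space. -/
structure HilbS : Type 1 where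
  carrier : Type
  [nacg : NormedAddCommGroup carrier]
  [ips : InnerProductSpace ℂ carrier]
  [cs : CompleteSpace carrier]

attribute [instance] HilbS.nacg HilbS.ips HilbS.cs

/-- The bounded operators on a Hilbert space. -/
abbrev B (H : HilbS) : Type := H.carrier →L[ℂ] H.carrier

/-- The weak operator topology on `B(H)`. -/
def wotTop (H : HilbS) : TopologicalSpace (B H) :=
  TopologicalSpace.induced
    (fun (T : B H) => fun p : H.carrier × H.carrier => ⟪p.1, T p.2⟫) inferInstance

/-- WOT-closure.  On convex sets this is the σ-weak closure. -/
def wClosure {H : HilbS} (S : Set (B H)) : Set (B H) := @closure _ (wotTop H) S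

/-- σ-weakly closed linear span. -/
def spanClosure {H : HilbS} (S : Set (B H)) : Set (B H) :=
  wClosure ((Submodule.span ℂ S : Submodule ℂ (B H)) : Set (B H))

/-- Normality (σ-weak continuity) of a map on a subset `S ⊆ B(H)`: continuity for the
weak operator topologies on all bounded parts of `S` (for bounded linear maps this is
equivalent to σ-weak continuity). -/
def NormalOn {H K : HilbS} (f : B H → B K) (S : Set (B H)) : Prop :=
  ∀ r : ℝ, @ContinuousOn _ _ (wotTop H) (wotTop K) f (S ∩ Metric.closedBall 0 r)

/-- Normality of a functional. -/
def NormalFunOn {H : HilbS} (f : B H → ℂ) (S : Set (B H)) : Prop :=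
  ∀ r : ℝ, @ContinuousOn _ _ (wotTop H) inferInstance f (S ∩ Metric.closedBall 0 r)

/-- The commutant of a set of operators. -/
def commutant {H : HilbS} (S : Set (B H)) : Set (B H) := Set.centralizer S

/-- A (concrete) von Neumann algebra: a star-closed set of operators equal to its
double commutant. -/
def IsVNA {H : HilbS} (M : Set (B H)) : Prop :=
  (∀ x ∈ M, star x ∈ M) ∧ commutant (commutant M) = M

/-- A self-adjoint projection. -/
def IsSAProj {H : HilbS} (p : B H) : Prop := p * p = p ∧ star p = p

/-- A full projection of `M`: the σ-weakly closed ideal `[M p M]` is all of `M`. -/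
def IsFullProj {H : HilbS} (M : Set (B H)) (p : B H) : Prop :=
  p ∈ M ∧ IsSAProj p ∧ spanClosure {z | ∃ a ∈ M, ∃ b ∈ M, z = a * p * b} = M

/-- A star-algebra homomorphism defined on `M ⊆ B(H)`, with "unit" `e` sent to `e'`. -/
structure IsStarHomOn {H K : HilbS} (M : Set (B H)) (e : B H) (e' : B K)
    (f : B H → B K) : Prop where
  map_add : ∀ x ∈ M, ∀ y ∈ M, f (x + y) = f x + f y
  map_smul : ∀ (c : ℂ), ∀ x ∈ M, f (c • x) = c • f x
  map_mul : ∀ x ∈ M, ∀ y ∈ M, f (x * y) = f x * f y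
  map_star : ∀ x ∈ M, f (star x) = star (f x)
  map_unit : f e = e'

/-- An anti-multiplicative star homomorphism on `M ⊆ B(H)`. -/
structure IsStarAntiHomOn {H K : HilbS} (M : Set (B H)) (e : B H) (e' : B K)
    (f : B H → B K) : Prop where
  map_add : ∀ x ∈ M, ∀ y ∈ M, f (x + y) = f x + f y
  map_smul : ∀ (c : ℂ), ∀ x ∈ M, f (c • x) = c • f x
  map_mul : ∀ x ∈ M, ∀ y ∈ M, f (x * y) = f y * f x
  map_star : ∀ x ∈ M, f (star x) = star (f x)
  map_unit : f e = e'

/-- The corner `pMp`. -/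
def corner {H : HilbS} (M : Set (B H)) (p : B H) : Set (B H) := {x ∈ M | x = p * x * p}

/-- Conjugation of an operator by a unitary (linear isometric equivalence). -/
def conjOp {X Y : Type} [NormedAddCommGroup X] [InnerProductSpace ℂ X]
    [NormedAddCommGroup Y] [InnerProductSpace ℂ Y]
    (u : X ≃ₗᵢ[ℂ] Y) (a : X →L[ℂ] X) : Y →L[ℂ] Y :=
  (u.toLinearIsometry.toContinuousLinearMap.comp a).comp
    u.symm.toLinearIsometry.toContinuousLinearMap

/-- A theory of Hilbert space tensor products: the data of binary tensor products of
Hilbert spaces, elementary tensors of operators and vectors (with the inner product law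
and density of elementary tensors, which determine everything uniquely), tensor
products of maps, slice maps, and the canonical associativity/commutativity/congruence
unitaries. -/
structure TensorTheory : Type 1 where
  T : HilbS → HilbS → HilbS
  tmul : ∀ {H K : HilbS}, B H → B K → B (T H K)
  tvec : ∀ {H K : HilbS}, H.carrier → K.carrier → (T H K).carrier
  tmap : ∀ {H K H' K' : HilbS}, (B H → B H') → (B K → B K') → B (T H K) → B (T H' K')
  sliceL : ∀ {H K : HilbS}, (B H → ℂ) → B (T H K) → B K
  sliceR : ∀ {H K : HilbS}, (B K → ℂ) → B (T H K) → B H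
  assoc : ∀ (H K L : HilbS), ((T (T H K) L).carrier ≃ₗᵢ[ℂ] (T H (T K L)).carrier)
  comm : ∀ (H K : HilbS), ((T H K).carrier ≃ₗᵢ[ℂ] (T K H).carrier)
  congrL : ∀ {H H' : HilbS} (L : HilbS),
    (H.carrier ≃ₗᵢ[ℂ] H'.carrier) → ((T H L).carrier ≃ₗᵢ[ℂ] (T H' L).carrier)
  congrR : ∀ (L : HilbS) {H H' : HilbS},
    (H.carrier ≃ₗᵢ[ℂ] H'.carrier) → ((T L H).carrier ≃ₗᵢ[ℂ] (T L H').carrier)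
  tmul_add_left : ∀ {H K : HilbS} (a b : B H) (c : B K), tmul (a + b) c = tmul a c + tmul b c
  tmul_add_right : ∀ {H K : HilbS} (a : B H) (b c : B K), tmul a (b + c) = tmul a b + tmul a c
  tmul_smul_left : ∀ {H K : HilbS} (z : ℂ) (a : B H) (c : B K), tmul (z • a) c = z • tmul a c
  tmul_smul_right : ∀ {H K : HilbS} (z : ℂ) (a : B H) (c : B K), tmul a (z • c) = z • tmul a c
  tmul_mul : ∀ {H K : HilbS} (a a' : B H) (b b' : B K),
    tmul a b * tmul a' b' = tmul (a * a') (b * b')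
  tmul_star : ∀ {H K : HilbS} (a : B H) (b : B K), star (tmul a b) = tmul (star a) (star b)
  tmul_one : ∀ {H K : HilbS}, tmul (1 : B H) (1 : B K) = 1
  tmul_apply : ∀ {H K : HilbS} (a : B H) (b : B K) (ξ : H.carrier) (η : K.carrier),
    tmul a b (tvec ξ η) = tvec (a ξ) (b η)
  tvec_inner : ∀ {H K : HilbS} (ξ ξ' : H.carrier) (η η' : K.carrier),
    ⟪tvec ξ η, tvec ξ' η'⟫ = ⟪ξ, ξ'⟫ * ⟪η, η'⟫
  tvec_dense : ∀ (H K : HilbS),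
    (Submodule.span ℂ
      (Set.image2 (fun (ξ : H.carrier) (η : K.carrier) => tvec ξ η)
        univ univ)).topologicalClosure = ⊤
  tmap_tmul : ∀ {H K H' K' : HilbS} (f : B H → B H') (g : B K → B K') (a : B H) (b : B K),
    tmap f g (tmul a b) = tmul (f a) (g b)
  sliceL_tmul : ∀ {H K : HilbS} (ω : B H → ℂ) (a : B H) (b : B K),
    sliceL ω (tmul a b) = ω a • b
  sliceR_tmul : ∀ {H K : HilbS} (ω : B K → ℂ) (a : B H) (b : B K),
    sliceR ω (tmul a b) = ω b • a
  assoc_conj : ∀ {H K L : HilbS} (a : B H) (b : B K) (c : B L),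
    conjOp (assoc H K L) (tmul (tmul a b) c) = tmul a (tmul b c)
  comm_conj : ∀ {H K : HilbS} (a : B H) (b : B K),
    conjOp (comm H K) (tmul a b) = tmul b a
  congrL_conj : ∀ {H H' L : HilbS} (u : H.carrier ≃ₗᵢ[ℂ] H'.carrier) (a : B H) (c : B L),
    conjOp (congrL L u) (tmul a c) = tmul (conjOp u a) c
  congrR_conj : ∀ {H H' L : HilbS} (u : H.carrier ≃ₗᵢ[ℂ] H'.carrier) (c : B L) (a : B H),
    conjOp (congrR L u) (tmul c a) = tmul c (conjOp u a)

namespace TensorTheory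

variable (Θ : TensorTheory)

/-- The von Neumann tensor product `M ⊗̄ N` (as a set: the σ-weakly closed span of
elementary tensors; for unitally embedded von Neumann algebras this is `M ⊗̄ N`). -/
def tensorSet {H K : HilbS} (M : Set (B H)) (N : Set (B K)) : Set (B (Θ.T H K)) :=
  spanClosure (Set.image2 (fun (a : B H) (b : B K) => Θ.tmul a b) M N)

/-- leg `12` of an operator on `H1 ⊗ H2` inside `(H1 ⊗ H2) ⊗ H3`. -/
def leg12 {H1 H2 : HilbS} (H3 : HilbS) (x : B (Θ.T H1 H2)) : B (Θ.T (Θ.T H1 H2) H3) :=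
  Θ.tmul x 1

/-- leg `23` of an operator on `H2 ⊗ H3` inside `(H1 ⊗ H2) ⊗ H3`. -/
def leg23 (H1 : HilbS) {H2 H3 : HilbS} (x : B (Θ.T H2 H3)) : B (Θ.T (Θ.T H1 H2) H3) :=
  conjOp (Θ.assoc H1 H2 H3).symm (Θ.tmul (1 : B H1) x)

/-- leg `13` of an operator on `H1 ⊗ H3` inside `(H1 ⊗ H2) ⊗ H3`. -/
def leg13 {H1 : HilbS} (H2 : HilbS) {H3 : HilbS} (x : B (Θ.T H1 H3)) :
    B (Θ.T (Θ.T H1 H2) H3) :=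
  conjOp (Θ.assoc H1 H2 H3).symm
    (conjOp (Θ.congrR H1 (Θ.comm H3 H2))
      (conjOp (Θ.assoc H1 H3 H2) (Θ.tmul x (1 : B H2))))

end TensorTheory

/-- A Morita correspondence between von Neumann algebras `A ⊆ B(Ha)`, `B ⊆ B(Hb)`:
a Hilbert space `K` with a faithful unital normal representation `π` of `A`, a faithful
unital normal anti-representation `ρ` of `B`, such that `π(A)' = ρ(B)`. -/
structure MoritaCorr {Ha Hb : HilbS} (As : Set (B Ha)) (Bs : Set (B Hb))
    (K : HilbS) (π : B Ha → B K) (ρ : B Hb → B K) : Prop where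
  π_hom : IsStarHomOn As 1 1 π
  π_normal : NormalOn π As
  π_inj : InjOn π As
  ρ_hom : IsStarAntiHomOn Bs 1 1 ρ
  ρ_normal : NormalOn ρ Bs
  ρ_inj : InjOn ρ Bs
  comm_eq : commutant (π '' As) = ρ '' Bs

/-- W*-Morita equivalence of von Neumann algebras. -/
def MoritaEquiv {Ha Hb : HilbS} (As : Set (B Ha)) (Bs : Set (B Hb)) : Prop :=
  ∃ (K : HilbS) (π : B Ha → B K) (ρ : B Hb → B K), MoritaCorr As Bs K π ρ

/-- A locally compact quantum group (von Neumann algebraic picture), presented by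
`L^∞(𝔾)` in standard position on `L²(𝔾) = Hg`, the dual algebra `L^∞(𝔾̌)`, the right
regular multiplicative unitary `V ∈ L^∞(𝔾̌) ⊗̄ L^∞(𝔾)` (with the pentagon equation),
the left regular unitary `W`, the right multiplicative unitary `V̌` of the dual, and
the anti-automorphism `adJd : x ↦ J̌ x* J̌` of `B(L²(𝔾))` given by the modular
conjugation `J̌` of `L^∞(𝔾̌)`; its restriction to `L^∞(𝔾)` is the unitary antipode. -/
structure LCQG (Θ : TensorTheory) (Hg : HilbS) where
  Gs : Set (B Hg)
  Gds : Set (B Hg)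
  hGs : IsVNA Gs
  hGds : IsVNA Gds
  V : B (Θ.T Hg Hg)
  W : B (Θ.T Hg Hg)
  Vc : B (Θ.T Hg Hg)
  V_unitary : V ∈ unitary (B (Θ.T Hg Hg))
  W_unitary : W ∈ unitary (B (Θ.T Hg Hg))
  Vc_unitary : Vc ∈ unitary (B (Θ.T Hg Hg))
  V_mem : V ∈ Θ.tensorSet Gds Gs
  W_mem : W ∈ Θ.tensorSet Gs (commutant Gds)
  Vc_mem : Vc ∈ Θ.tensorSet (commutant Gs) Gds
  pentagon : Θ.leg12 Hg V * Θ.leg13 Hg V * Θ.leg23 Hg V = Θ.leg23 Hg V * Θ.leg12 Hg V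
  comult_mem : ∀ x ∈ Gs, V * Θ.tmul x 1 * star V ∈ Θ.tensorSet Gs Gs
  comult_W : ∀ x ∈ Gs, V * Θ.tmul x 1 * star V = star W * Θ.tmul 1 x * W
  dual_comult_mem : ∀ y ∈ Gds, Vc * Θ.tmul y 1 * star Vc ∈ Θ.tensorSet Gds Gds
  dual_comult_eq : ∀ y ∈ Gds, Vc * Θ.tmul y 1 * star Vc = star V * Θ.tmul 1 y * V
  adJd : B Hg → B Hg
  adJd_add : ∀ x y, adJd (x + y) = adJd x + adJd y
  adJd_smul : ∀ (c : ℂ) (x), adJd (c • x) = c • adJd x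
  adJd_mul : ∀ x y, adJd (x * y) = adJd y * adJd x
  adJd_star : ∀ x, adJd (star x) = star (adJd x)
  adJd_invol : ∀ x, adJd (adJd x) = x
  adJd_one : adJd 1 = 1
  adJd_normal : NormalOn adJd univ
  adJd_Gs : adJd '' Gs = Gs
  adJd_Gds : adJd '' Gds = commutant Gds

namespace LCQG

variable {Θ : TensorTheory} {Hg : HilbS}

/-- The comultiplication `Δ(x) = V (x ⊗ 1) V*` (as a map on all of `B(L²𝔾)`, whose
restriction to `L^∞(𝔾)` is the coproduct). -/
def coΔ (Q : LCQG Θ Hg) : B Hg → B (Θ.T Hg Hg) := fun x => Q.V * Θ.tmul x 1 * star Q.V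

/-- The dual comultiplication `Δ̌(y) = V̌ (y ⊗ 1) V̌*`. -/
def coΔd (Q : LCQG Θ Hg) : B Hg → B (Θ.T Hg Hg) := fun y => Q.Vc * Θ.tmul y 1 * star Q.Vc

/-- `L^∞(𝔾̂) = L^∞(𝔾̌)'`. -/
def Ghat (Q : LCQG Θ Hg) : Set (B Hg) := commutant Q.Gds

/-- The unitary antipode `R(x) = J̌ x* J̌`. -/
def R (Q : LCQG Θ Hg) : B Hg → B Hg := Q.adJd

end LCQG

/-- A unitary representation of `𝔾` on `K`: a unitary `U ∈ B(K) ⊗̄ L^∞(𝔾)` with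
`(id ⊗ Δ)(U) = U₁₂ U₁₃`. -/
structure IsGRep {Θ : TensorTheory} {Hg : HilbS} (Q : LCQG Θ Hg) (K : HilbS)
    (U : B (Θ.T K Hg)) : Prop where
  unitary_mem : U ∈ unitary (B (Θ.T K Hg))
  rep : Θ.tmap id Q.coΔ U = conjOp (Θ.assoc K Hg Hg) (Θ.tmul U 1 * Θ.leg13 Hg U)

/-- A (right) coaction of `𝔾` on the von Neumann algebra `A ⊆ B(Ha)` having unit `e`
(use `e = 1` for unitally embedded algebras, `e = p` for corners): an injective normal
unital star-homomorphism `α : A → A ⊗̄ L^∞(𝔾)` with `(α ⊗ id) ∘ α = (id ⊗ Δ) ∘ α`. -/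
structure IsCoactionOn {Θ : TensorTheory} {Hg Ha : HilbS} (Q : LCQG Θ Hg)
    (As : Set (B Ha)) (e : B Ha) (α : B Ha → B (Θ.T Ha Hg)) : Prop where
  hom : IsStarHomOn As e (Θ.tmul e 1) α
  normal : NormalOn α As
  inj : InjOn α As
  mapsTo : MapsTo α As (Θ.tensorSet As Q.Gs)
  coassoc : ∀ a ∈ As, conjOp (Θ.assoc Ha Hg Hg) (Θ.tmap α id (α a)) = Θ.tmap id Q.coΔ (α a)

/-- A `𝔾`-W*-algebra. -/
def IsGWAlg {Θ : TensorTheory} {Hg Ha : HilbS} (Q : LCQG Θ Hg)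
    (As : Set (B Ha)) (α : B Ha → B (Θ.T Ha Hg)) : Prop :=
  IsVNA As ∧ (1 : B Ha) ∈ As ∧ IsCoactionOn Q As 1 α

/-- A `𝔾`-Morita correspondence between `(A, α)` and `(B, β)` (Definition 1.2/3.1 of
the paper): a faithful unital normal representation `π` of `A` and anti-representation
`ρ` of `B` on `K` with `π(A)' = ρ(B)`, and a unitary `𝔾`-representation `U` with
`(π ⊗ id)α(a) = U(π(a) ⊗ 1)U*` and `(ρ ⊗ R)β(b) = U*(ρ(b) ⊗ 1)U`. -/
structure GMoritaCorr {Θ : TensorTheory} {Hg Ha Hb : HilbS} (Q : LCQG Θ Hg)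
    (As : Set (B Ha)) (α : B Ha → B (Θ.T Ha Hg))
    (Bs : Set (B Hb)) (β : B Hb → B (Θ.T Hb Hg))
    (K : HilbS) (π : B Ha → B K) (ρ : B Hb → B K) (U : B (Θ.T K Hg)) : Prop where
  π_hom : IsStarHomOn As 1 1 π
  π_normal : NormalOn π As
  π_inj : InjOn π As
  ρ_hom : IsStarAntiHomOn Bs 1 1 ρ
  ρ_normal : NormalOn ρ Bs
  ρ_inj : InjOn ρ Bs
  comm_eq : commutant (π '' As) = ρ '' Bs
  U_rep : IsGRep Q K U
  π_cov : ∀ a ∈ As, Θ.tmap π id (α a) = U * Θ.tmul (π a) 1 * star U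
  ρ_cov : ∀ b ∈ Bs, Θ.tmap ρ Q.R (β b) = star U * Θ.tmul (ρ b) 1 * U

/-- `𝔾`-W*-Morita equivalence `(A, α) ∼_𝔾 (B, β)`. -/
def GMoritaEquiv {Θ : TensorTheory} {Hg Ha Hb : HilbS} (Q : LCQG Θ Hg)
    (As : Set (B Ha)) (α : B Ha → B (Θ.T Ha Hg))
    (Bs : Set (B Hb)) (β : B Hb → B (Θ.T Hb Hg)) : Prop :=
  ∃ (K : HilbS) (π : B Ha → B K) (ρ : B Hb → B K) (U : B (Θ.T K Hg)),
    GMoritaCorr Q As α Bs β K π ρ U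

/-- A `𝔾`-equivariant isomorphism between (possibly non-unitally embedded)
`𝔾`-W*-algebras. -/
structure IsGEquivIso {Θ : TensorTheory} {Hg H1 H2 : HilbS} (Q : LCQG Θ Hg)
    (Ms : Set (B H1)) (e₁ : B H1) (γ : B H1 → B (Θ.T H1 Hg))
    (Ns : Set (B H2)) (e₂ : B H2) (δ : B H2 → B (Θ.T H2 Hg))
    (φ : B H1 → B H2) : Prop where
  hom : IsStarHomOn Ms e₁ e₂ φ
  normal : NormalOn φ Ms
  inj : InjOn φ Ms
  image : φ '' Ms = Ns
  equivariant : ∀ x ∈ Ms, Θ.tmap φ id (γ x) = δ (φ x)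

/-- The trivial coaction `τ(a) = a ⊗ 1`. -/
def trivCoact (Θ : TensorTheory) (Hg Ha : HilbS) : B Ha → B (Θ.T Ha Hg) :=
  fun a => Θ.tmul a 1

/-- Fixed points of a coaction. -/
def fixedPts (Θ : TensorTheory) {Hg Ha : HilbS} (As : Set (B Ha))
    (α : B Ha → B (Θ.T Ha Hg)) : Set (B Ha) :=
  {x ∈ As | α x = Θ.tmul x 1}

/-- An inner action: implemented by a unitary `𝔾`-representation `U ∈ A ⊗̄ L^∞(𝔾)`. -/
def IsInnerAction {Θ : TensorTheory} {Hg Ha : HilbS} (Q : LCQG Θ Hg)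
    (As : Set (B Ha)) (α : B Ha → B (Θ.T Ha Hg)) : Prop :=
  ∃ U : B (Θ.T Ha Hg), U ∈ Θ.tensorSet As Q.Gs ∧ IsGRep Q Ha U ∧
    ∀ a ∈ As, α a = U * Θ.tmul a 1 * star U

/-- A locally compact quantum group together with its (right) dual, realized on the
same `L²`-space with the standard compatibilities. -/
structure LCQGPair (Θ : TensorTheory) (Hg : HilbS) where
  Q : LCQG Θ Hg
  Qd : LCQG Θ Hg
  dual_alg : Qd.Gs = Q.Gds
  dual_V : Qd.V = Q.Vc
  dual_comm : Qd.Gds = commutant Q.Gs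

/-- The crossed product `A ⋊_α 𝔾 = [α(A)(1 ⊗ L^∞(𝔾̌))]''` (as σ-weakly closed span). -/
def crossedSet {Θ : TensorTheory} {Hg : HilbS} (Q : LCQG Θ Hg) {Ha : HilbS}
    (As : Set (B Ha)) (α : B Ha → B (Θ.T Ha Hg)) : Set (B (Θ.T Ha Hg)) :=
  spanClosure {z | ∃ a ∈ As, ∃ y ∈ Q.Gds, z = α a * Θ.tmul (1 : B Ha) y}

/-- The extension `id ⊗ Δ_r` (equivalently, of `id ⊗ Δ`) to operators on `Ha ⊗ L²(𝔾)`: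
`z ↦ V₂₃ z₁₂ V₂₃*`.  Restricted to `A ⊗̄ L^∞(𝔾)` this is `id ⊗ Δ`, restricted to
`A ⋊_α 𝔾` this is the adjoint `𝔾`-action `id ⊗ Δ_r`. -/
def coactV {Θ : TensorTheory} {Hg : HilbS} (Q : LCQG Θ Hg) {Ha : HilbS} :
    B (Θ.T Ha Hg) → B (Θ.T (Θ.T Ha Hg) Hg) :=
  fun z => Θ.leg23 Ha Q.V * Θ.tmul z 1 * star (Θ.leg23 Ha Q.V)

/-- The dual action `id ⊗ Δ̌_r` on operators on `Ha ⊗ L²(𝔾)`: `z ↦ V̌₂₃ z₁₂ V̌₂₃*`. -/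
def coactVc {Θ : TensorTheory} {Hg : HilbS} (Q : LCQG Θ Hg) {Ha : HilbS} :
    B (Θ.T Ha Hg) → B (Θ.T (Θ.T Ha Hg) Hg) :=
  fun z => Θ.leg23 Ha Q.Vc * Θ.tmul z 1 * star (Θ.leg23 Ha Q.Vc)

/-- A unital completely positive map defined on `M ⊆ B(H)` (with unit `e ↦ e'`). -/
structure IsUCPOn {H K : HilbS} (M : Set (B H)) (e : B H) (e' : B K)
    (f : B H → B K) : Prop where
  map_add : ∀ x ∈ M, ∀ y ∈ M, f (x + y) = f x + f y
  map_smul : ∀ (c : ℂ), ∀ x ∈ M, f (c • x) = c • f x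
  map_unit : f e = e'
  cp : ∀ (n : ℕ) (x : Fin n → B H), (∀ i, x i ∈ M) → ∀ ξ : Fin n → K.carrier,
    0 ≤ ∑ i, ∑ j, ⟪ξ i, (f (star (x i) * x j)) (ξ j)⟫

/-- Injectivity of a von Neumann algebra: a ucp conditional expectation `B(H) → A`. -/
def VNInjective {H : HilbS} (M : Set (B H)) : Prop :=
  ∃ E : B H → B H, IsUCPOn (univ : Set (B H)) 1 1 E ∧ MapsTo E univ M ∧ ∀ x ∈ M, E x = x

/-- `𝔾`-amenability of `(A, α)`: a `𝔾`-equivariant ucp conditional expectation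
`A ⊗̄ L^∞(𝔾) → α(A)`. -/
def GAmenable {Θ : TensorTheory} {Hg Ha : HilbS} (Q : LCQG Θ Hg)
    (As : Set (B Ha)) (α : B Ha → B (Θ.T Ha Hg)) : Prop :=
  ∃ E : B (Θ.T Ha Hg) → B (Θ.T Ha Hg),
    IsUCPOn (Θ.tensorSet As Q.Gs) 1 1 E ∧
    MapsTo E (Θ.tensorSet As Q.Gs) (α '' As) ∧
    (∀ a ∈ As, E (α a) = α a) ∧
    ∀ z ∈ Θ.tensorSet As Q.Gs, Θ.tmap E id (coactV Q z) = coactV Q (E z)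

/-- Inner `𝔾`-amenability of `(A, α)`: a `𝔾`-equivariant ucp conditional expectation
`A ⋊_α 𝔾 → α(A)` for the adjoint action. -/
def InnerGAmenable {Θ : TensorTheory} {Hg Ha : HilbS} (Q : LCQG Θ Hg)
    (As : Set (B Ha)) (α : B Ha → B (Θ.T Ha Hg)) : Prop :=
  ∃ E : B (Θ.T Ha Hg) → B (Θ.T Ha Hg),
    IsUCPOn (crossedSet Q As α) 1 1 E ∧
    MapsTo E (crossedSet Q As α) (α '' As) ∧
    (∀ a ∈ As, E (α a) = α a) ∧
    ∀ z ∈ crossedSet Q As α, Θ.tmap E id (coactV Q z) = coactV Q (E z)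

/-- `𝔾`-injectivity (by the characterization `𝔾`-injective ⟺ injective + `𝔾`-amenable,
[DR24a, Proposition 3.10]). -/
def GInjective {Θ : TensorTheory} {Hg Ha : HilbS} (Q : LCQG Θ Hg)
    (As : Set (B Ha)) (α : B Ha → B (Θ.T Ha Hg)) : Prop :=
  VNInjective As ∧ GAmenable Q As α

/-- Relative amenability of `N ⊆ M` (both `𝔾`-invariant subalgebras of `B(L²𝔾)` for a
coproduct-type action): a `𝔾`-equivariant ucp map `M → N`. -/
def RelativelyAmenable {Θ : TensorTheory} {Hg : HilbS} (Q : LCQG Θ Hg)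
    (Ms Ns : Set (B Hg)) : Prop :=
  ∃ E : B Hg → B Hg, IsUCPOn Ms 1 1 E ∧ MapsTo E Ms Ns ∧
    ∀ y ∈ Ms, Θ.tmap E id (Q.coΔ y) = Q.coΔ (E y)

/-- A standard form of a `𝔾`-W*-algebra `(M, μ)`, with the unitary implementation of
the action: a faithful unital normal representation `π` on `L`, the conjugation map
`adJ : x ↦ J x* J` with `J π(M) J = π(M)'` and `J c J = c*` for central `c`, and
a unitary `𝔾`-representation `U` implementing `μ`. -/
structure StdFormG {Θ : TensorTheory} {Hg Ha : HilbS} (Q : LCQG Θ Hg)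
    (Ms : Set (B Ha)) (μ : B Ha → B (Θ.T Ha Hg)) where
  L : HilbS
  π : B Ha → B L
  hom : IsStarHomOn Ms 1 1 π
  normal : NormalOn π Ms
  inj : InjOn π Ms
  adJ : B L → B L
  adJ_add : ∀ x y, adJ (x + y) = adJ x + adJ y
  adJ_smul : ∀ (c : ℂ) (x), adJ (c • x) = c • adJ x
  adJ_mul : ∀ x y, adJ (x * y) = adJ y * adJ x
  adJ_star : ∀ x, adJ (star x) = star (adJ x)
  adJ_invol : ∀ x, adJ (adJ x) = x
  adJ_one : adJ 1 = 1
  adJ_normal : NormalOn adJ univ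
  adJ_image : adJ '' (π '' Ms) = commutant (π '' Ms)
  adJ_central : ∀ x ∈ (π '' Ms) ∩ commutant (π '' Ms), adJ x = star x
  U : B (Θ.T L Hg)
  U_rep : IsGRep Q L U
  impl : ∀ a ∈ Ms, Θ.tmap π id (μ a) = U * Θ.tmul (π a) 1 * star U

/-- Matrix coefficients of a (raw) `𝔾`-`A`-`A`-correspondence `(K, π, ρ, U)`. -/
def corrCoeff (Θ : TensorTheory) {Hg Ha : HilbS} {K : HilbS}
    (π ρ : B Ha → B K) (U : B (Θ.T K Hg)) (ξ ξ' : K.carrier)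
    (a b : B Ha) (η η' : Hg.carrier) : ℂ :=
  ⟪Θ.tvec ξ η, ((Θ.tmul (π a) 1 * U * Θ.tmul (ρ b) 1 : B (Θ.T K Hg))) (Θ.tvec ξ' η')⟫

/-- `𝔾`-equivariant weak containment of `𝔾`-`A`-`A`-correspondences, formulated by
approximation of all (equivariant) matrix coefficients. -/
def wkContained (Θ : TensorTheory) {Hg Ha : HilbS} (As : Set (B Ha))
    (K₁ : HilbS) (π₁ ρ₁ : B Ha → B K₁) (U₁ : B (Θ.T K₁ Hg))
    (K₂ : HilbS) (π₂ ρ₂ : B Ha → B K₂) (U₂ : B (Θ.T K₂ Hg)) : Prop :=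
  ∀ (ξ : K₁.carrier) (F : Finset (B Ha × B Ha × Hg.carrier × Hg.carrier)) (ε : ℝ),
    0 < ε → (∀ q ∈ F, q.1 ∈ As ∧ q.2.1 ∈ As) →
    ∃ (n : ℕ) (η : Fin n → K₂.carrier), ∀ q ∈ F,
      ‖corrCoeff Θ π₁ ρ₁ U₁ ξ ξ q.1 q.2.1 q.2.2.1 q.2.2.2 -
        ∑ i, corrCoeff Θ π₂ ρ₂ U₂ (η i) (η i) q.1 q.2.1 q.2.2.1 q.2.2.2‖ < ε

/-- Strong `𝔾`-amenability of `(A, α)`: the trivial `𝔾`-`A`-`A`-correspondence `L²(A)`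
is `𝔾`-weakly contained in `L²(A ⊗̄ L^∞(𝔾))` (for any realizations of the standard
forms with their unitary implementations). -/
def StronglyGAmenable {Θ : TensorTheory} {Hg Ha : HilbS} (Q : LCQG Θ Hg)
    (As : Set (B Ha)) (α : B Ha → B (Θ.T Ha Hg)) : Prop :=
  ∀ (sfA : StdFormG Q As α) (sfT : StdFormG Q (Θ.tensorSet As Q.Gs) (coactV Q)),
    wkContained Θ As sfA.L sfA.π (fun a => sfA.adJ (sfA.π a)) sfA.U
      sfT.L (fun a => sfT.π (α a)) (fun a => sfT.adJ (sfT.π (α a))) sfT.U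

/-- Strong inner `𝔾`-amenability of `(A, α)`: the trivial `𝔾`-`A`-`A`-correspondence is
`𝔾`-weakly contained in `L²(A ⋊_α 𝔾)` with the adjoint action. -/
def StronglyInnerGAmenable {Θ : TensorTheory} {Hg Ha : HilbS} (Q : LCQG Θ Hg)
    (As : Set (B Ha)) (α : B Ha → B (Θ.T Ha Hg)) : Prop :=
  ∀ (sfA : StdFormG Q As α) (sfT : StdFormG Q (crossedSet Q As α) (coactV Q)),
    wkContained Θ As sfA.L sfA.π (fun a => sfA.adJ (sfA.π a)) sfA.U
      sfT.L (fun a => sfT.π (α a)) (fun a => sfT.adJ (sfT.π (α a))) sfT.U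

/-- A Vaes-closed quantum subgroup `ℍ` of `𝔾`, given by a faithful unital normal
*-homomorphism `γ̌ : L^∞(ℍ̌) → L^∞(𝔾̌)` intertwining the dual coproducts. -/
structure ClosedQSubgroup (Θ : TensorTheory) {Hg Hh : HilbS}
    (G : LCQG Θ Hg) (Hq : LCQG Θ Hh) where
  γd : B Hh → B Hg
  hom : IsStarHomOn Hq.Gds 1 1 γd
  normal : NormalOn γd Hq.Gds
  inj : InjOn γd Hq.Gds
  mapsTo : MapsTo γd Hq.Gds G.Gds
  intertwine : ∀ y ∈ Hq.Gds, Θ.tmap γd γd (Hq.coΔd y) = G.coΔd (γd y)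

namespace ClosedQSubgroup

variable {Θ : TensorTheory} {Hg Hh : HilbS} {G : LCQG Θ Hg} {Hq : LCQG Θ Hh}

/-- `V_{𝔾,ℍ} = (γ̌ ⊗ id)(V_ℍ)`. -/
def VGH (c : ClosedQSubgroup Θ G Hq) : B (Θ.T Hg Hh) := Θ.tmap c.γd id Hq.V

/-- The coaction `Δ^{𝔾,ℍ} : L^∞(𝔾) → L^∞(𝔾) ⊗̄ L^∞(ℍ)`. -/
def ΔGH (c : ClosedQSubgroup Θ G Hq) : B Hg → B (Θ.T Hg Hh) :=
  fun x => c.VGH * Θ.tmul x 1 * star c.VGH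

/-- `γ̂ = Ad(J̌_𝔾) ∘ γ̌ ∘ Ad(J̌_ℍ) : L^∞(ℍ̂) → L^∞(𝔾̂)`. -/
def γhat (c : ClosedQSubgroup Θ G Hq) : B Hh → B Hg :=
  fun y => G.adJd (c.γd (Hq.adJd y))

/-- `W_{ℍ,𝔾} = (id ⊗ γ̂)(W_ℍ)`. -/
def WHG (c : ClosedQSubgroup Θ G Hq) : B (Θ.T Hh Hg) := Θ.tmap id c.γhat Hq.W

/-- The coaction `Δ^{ℍ,𝔾} : L^∞(𝔾) → L^∞(ℍ) ⊗̄ L^∞(𝔾)`. -/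
def ΔHG (c : ClosedQSubgroup Θ G Hq) : B Hg → B (Θ.T Hh Hg) :=
  fun x => star c.WHG * Θ.tmul 1 x * c.WHG

/-- The cotensor product (induction) `A □_ℍ L^∞(𝔾)`. -/
def cotensor (c : ClosedQSubgroup Θ G Hq) {Ha : HilbS} (As : Set (B Ha))
    (αH : B Ha → B (Θ.T Ha Hh)) : Set (B (Θ.T Ha Hg)) :=
  {z ∈ Θ.tensorSet As G.Gs |
    Θ.tmap αH id z = conjOp (Θ.assoc Ha Hh Hg).symm (Θ.tmap id c.ΔHG z)}

/-- The canonical dual `𝔾̌`-action `δ = (id ⊗ id ⊗ γ̌) ∘ (id ⊗ Δ̌_r^ℍ)` on `A ⋊_α ℍ`. -/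
def dualCrossedAct (c : ClosedQSubgroup Θ G Hq) {Ha : HilbS} :
    B (Θ.T Ha Hh) → B (Θ.T (Θ.T Ha Hh) Hg) :=
  fun z => Θ.tmap id c.γd (coactVc Hq z)

end ClosedQSubgroup

/-- The dual coideal `L^∞(𝕂̌) = J̌ (L^∞(𝕂\𝔾)' ∩ L^∞(𝔾̂)) J̌ ⊆ L^∞(𝔾̌)`. -/
def dualCoideal {Θ : TensorTheory} {Hg : HilbS} (Q : LCQG Θ Hg)
    (Kset : Set (B Hg)) : Set (B Hg) :=
  Q.adJd '' (commutant Kset ∩ Q.Ghat)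

/-- The vector functional `ω_{ξ,η} = ⟪ξ, · η⟫`. -/
def vecFun {H : HilbS} (ξ η : H.carrier) : B H → ℂ := fun T => ⟪ξ, T η⟫

/-- The C*-algebra of regular elements of a `𝔾`-W*-algebra (`𝔾` compact): the norm
closed span of the elements `(id ⊗ ω)α(a)`, `ω` normal. -/
def regulars (Θ : TensorTheory) {Hg Ha : HilbS} (As : Set (B Ha))
    (α : B Ha → B (Θ.T Ha Hg)) : Set (B Ha) :=
  closure ((Submodule.span ℂ
    {z | ∃ a ∈ As, ∃ ξ η : Hg.carrier, z = Θ.sliceR (vecFun ξ η) (α a)} :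
      Submodule ℂ (B Ha)) : Set (B Ha))

/-- Compactness of `𝔾`: a (normal, faithful, bi-invariant) Haar state. -/
structure IsCompactData {Θ : TensorTheory} {Hg : HilbS} (Q : LCQG Θ Hg) where
  haar : B Hg → ℂ
  haar_add : ∀ x y, haar (x + y) = haar x + haar y
  haar_smul : ∀ (c : ℂ) (x), haar (c • x) = c * haar x
  haar_pos : ∀ x ∈ Q.Gs, 0 ≤ haar (star x * x)
  haar_one : haar 1 = 1
  haar_normal : NormalFunOn haar Q.Gs
  haar_faithful : ∀ x ∈ Q.Gs, haar (star x * x) = 0 → x = 0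
  left_inv : ∀ x ∈ Q.Gs, Θ.sliceL haar (Q.coΔ x) = haar x • 1
  right_inv : ∀ x ∈ Q.Gs, Θ.sliceR haar (Q.coΔ x) = haar x • 1

/-- `𝕂` is a compact quasi-subgroup of `𝔾`: the coideal `L^∞(𝕂\𝔾)` arises as the fixed
points of the conditional expectation `(id ⊗ ω)Δ` of an idempotent state `ω`. -/
def IsCompactQuasiSubgroup (Θ : TensorTheory) {Hg : HilbS} (Q : LCQG Θ Hg)
    (Kset : Set (B Hg)) : Prop :=
  ∃ ω : B Hg → ℂ,
    (∀ x y, ω (x + y) = ω x + ω y) ∧ (∀ (c : ℂ) (x), ω (c • x) = c * ω x) ∧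
    (∀ x ∈ Q.Gs, 0 ≤ ω (star x * x)) ∧ ω 1 = 1 ∧
    (∀ x ∈ Q.Gs, ω (Θ.sliceR ω (Q.coΔ x)) = ω x) ∧
    Kset = {x ∈ Q.Gs | Θ.sliceR ω (Q.coΔ x) = x}

end Paper

namespace Paper

open Set
open scoped ComplexOrder

/-- An equivalence `A`-`B`-bimodule `X` (Rieffel): a complex vector space which is
simultaneously a left Hilbert W*-`A`-module and a right Hilbert W*-`B`-module, with
`⟨x,y⟩_A z = x ⟨y,z⟩_B` and σ-weakly dense spans of inner products. -/
structure EquivBimodule {Ha Hb : HilbS} (As : Set (B Ha)) (Bs : Set (B Hb)) where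
  X : Type
  [addX : AddCommGroup X]
  [modX : Module ℂ X]
  actL : B Ha → X → X
  actR : X → B Hb → X
  ipA : X → X → B Ha
  ipB : X → X → B Hb
  actL_one : ∀ x, actL 1 x = x
  actL_mul : ∀ a ∈ As, ∀ a' ∈ As, ∀ x, actL (a * a') x = actL a (actL a' x)
  actL_add : ∀ a ∈ As, ∀ x y, actL a (x + y) = actL a x + actL a y
  actL_add' : ∀ a ∈ As, ∀ a' ∈ As, ∀ x, actL (a + a') x = actL a x + actL a' x
  actL_smul : ∀ (c : ℂ), ∀ a ∈ As, ∀ x, actL (c • a) x = c • actL a x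
  actL_smul' : ∀ (c : ℂ), ∀ a ∈ As, ∀ x, actL a (c • x) = c • actL a x
  actR_one : ∀ x, actR x 1 = x
  actR_mul : ∀ b ∈ Bs, ∀ b' ∈ Bs, ∀ x, actR x (b * b') = actR (actR x b) b'
  actR_add : ∀ b ∈ Bs, ∀ x y, actR (x + y) b = actR x b + actR y b
  actR_add' : ∀ b ∈ Bs, ∀ b' ∈ Bs, ∀ x, actR x (b + b') = actR x b + actR x b'
  actR_smul : ∀ (c : ℂ), ∀ b ∈ Bs, ∀ x, actR x (c • b) = c • actR x b
  actR_smul' : ∀ (c : ℂ), ∀ b ∈ Bs, ∀ x, actR (c • x) b = c • actR x b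
  bimod : ∀ a ∈ As, ∀ b ∈ Bs, ∀ x, actR (actL a x) b = actL a (actR x b)
  ipA_mem : ∀ x y, ipA x y ∈ As
  ipB_mem : ∀ x y, ipB x y ∈ Bs
  ipB_add_right : ∀ x y z, ipB x (y + z) = ipB x y + ipB x z
  ipB_smul_right : ∀ (c : ℂ) (x y), ipB x (c • y) = c • ipB x y
  ipB_star : ∀ x y, star (ipB x y) = ipB y x
  ipB_actR : ∀ x y, ∀ b ∈ Bs, ipB x (actR y b) = ipB x y * b
  ipB_actL : ∀ a ∈ As, ∀ x y, ipB (actL a x) y = ipB x (actL (star a) y)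
  ipB_pos : ∀ x, (ipB x x).IsPositive
  ipB_defin : ∀ x, ipB x x = 0 → x = 0
  ipA_add_left : ∀ x y z, ipA (x + y) z = ipA x z + ipA y z
  ipA_smul_left : ∀ (c : ℂ) (x y), ipA (c • x) y = c • ipA x y
  ipA_star : ∀ x y, star (ipA x y) = ipA y x
  ipA_actL : ∀ a ∈ As, ∀ x y, ipA (actL a x) y = a * ipA x y
  ipA_actR : ∀ b ∈ Bs, ∀ x y, ipA (actR x b) y = ipA x (actR y (star b))
  ipA_pos : ∀ x, (ipA x x).IsPositive
  compat : ∀ x y z, actL (ipA x y) z = actR x (ipB y z)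
  denseA : spanClosure {z : B Ha | ∃ x y, z = ipA x y} = As
  denseB : spanClosure {z : B Hb | ∃ x y, z = ipB x y} = Bs
  normalL : ∀ x y, NormalOn (fun a => ipB x (actL a y)) As
  normalR : ∀ x y, NormalOn (fun b => ipA (actR x b) y) Bs

attribute [instance] EquivBimodule.addX EquivBimodule.modX

/-!
Write `V x : K → X ⊗_B K` for the creation operator `ξ ↦ x ⊗ ξ`. The inner product gives
`(V x)† V y = π_K ⟨x, y⟩_B`, and the compatibility of the two inner products turns this into
`V x (V y)† = π_⊠ ⟨x, y⟩_A`. An operator `T` in the commutant of `π_⊠(A)` therefore commutes with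
every `V x (V y)†`. For unitary `T` this says that the families `(V x)†` and `(V x)† T` have the
same Gram operators, so that some `S` on `K` satisfies `S (V x)† = (V x)† T`; linearity extends this
to all `T`. Such an `S` commutes with `π_K(B)`, hence is `ρ_K(c)` for some `c`, and `T = ρ_⊠(c)`.

The ranges of the `(V x)†` span a dense subspace, because `π_K` is normal and `⟨X, X⟩_B` is σ-weakly
total in `B`. This puts `S` in the commutant of `π_K(B)` and makes `ρ_⊠` faithful.
-/

open Filter Topology NNReal ContinuousLinearMap

section JointlyTotal

/-- A family of operators with common codomain is jointly total if their ranges together span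
a dense subspace. For the operators of a represented algebra this is nondegeneracy. -/
def JointlyTotal {ι 𝕜 E F : Type*} [NontriviallyNormedField 𝕜] [NormedAddCommGroup E]
    [NormedSpace 𝕜 E] [NormedAddCommGroup F] [NormedSpace 𝕜 F] (V : ι → E →L[𝕜] F) : Prop :=
  Dense (Submodule.span 𝕜 (range fun p : ι × E => V p.1 p.2) : Set F)

theorem JointlyTotal.ext {ι 𝕜 E F G : Type*} [NontriviallyNormedField 𝕜] [NormedAddCommGroup E]
    [NormedSpace 𝕜 E] [NormedAddCommGroup F] [NormedSpace 𝕜 F] [NormedAddCommGroup G]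
    [NormedSpace 𝕜 G] {V : ι → E →L[𝕜] F} (hV : JointlyTotal V) {T T' : F →L[𝕜] G}
    (h : ∀ i, T ∘L V i = T' ∘L V i) : T = T' := by
  refine ContinuousLinearMap.ext_on hV ?_
  rintro _ ⟨⟨i, v⟩, rfl⟩
  exact DFunLike.congr_fun (h i) v

/-- A uniformly bounded family is equicontinuous, so its convergence set is closed. -/
theorem tendsto_apply_of_dense_span {α 𝕜 𝕜' E F : Type*} [NontriviallyNormedField 𝕜]
    [NontriviallyNormedField 𝕜'] {σ : 𝕜 →+* 𝕜'} [RingHomIsometric σ] [NormedAddCommGroup E]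
    [NormedSpace 𝕜 E] [NormedAddCommGroup F] [NormedSpace 𝕜' F] {S : Set E}
    (hS : Dense (Submodule.span 𝕜 S : Set E)) {l : Filter α} {T : α → E →SL[σ] F}
    {T₀ : E →SL[σ] F} {C : ℝ≥0} (hC : ∀ᶠ a in l, ‖T a‖₊ ≤ C)
    (h : ∀ v ∈ S, Tendsto (T · v) l (𝓝 (T₀ v))) (v : E) :
    Tendsto (T · v) l (𝓝 (T₀ v)) := by
  let i : {a | ‖T a‖₊ ≤ C} → α := Subtype.val
  have tendsto_iff (w : E) : Tendsto (fun a => T (i a) w) (comap i l) (𝓝 (T₀ w)) ↔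
      Tendsto (T · w) l (𝓝 (T₀ w)) :=
    tendsto_comap'_iff (m := (T · w)) (i := i) (by rw [Subtype.range_coe]; exact hC)
  have hspan : ∀ w ∈ Submodule.span 𝕜 S, Tendsto (T · w) l (𝓝 (T₀ w)) := fun w hw => by
    induction hw using Submodule.span_induction with
    | mem w hw => exact h w hw
    | zero => simpa only [map_zero] using tendsto_const_nhds
    | add x y _ _ hx hy => simpa only [map_add] using hx.add hy
    | smul c x _ hx => simpa only [map_smulₛₗ] using hx.const_smul (σ c)
  have hequi : Equicontinuous fun a w => T (i a) w :=
    (LipschitzWith.uniformEquicontinuous _ C fun a =>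
      (T (i a)).lipschitz.weaken a.2).equicontinuous
  have hclosed : IsClosed {w | Tendsto (fun a => T (i a) w) (comap i l) (𝓝 (T₀ w))} :=
    hequi.isClosed_setOfPred_tendsto T₀.continuous
  exact (tendsto_iff v).1 (closure_minimal (fun w hw => (tendsto_iff w).2 (hspan w hw)) hclosed
    (hS v))

end JointlyTotal

section InnerProduct

variable {ι 𝕜 E F G : Type*} [RCLike 𝕜] [NormedAddCommGroup E] [InnerProductSpace 𝕜 E]
  [NormedAddCommGroup F] [InnerProductSpace 𝕜 F] [NormedAddCommGroup G] [InnerProductSpace 𝕜 G]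

theorem exists_clm_of_inner_eq [CompleteSpace F] {v : ι → E} {w : ι → F}
    (hv : Dense (Submodule.span 𝕜 (range v) : Set E))
    (h : ∀ i k, inner 𝕜 (v i) (v k) = inner 𝕜 (w i) (w k)) :
    ∃ S : E →L[𝕜] F, ∀ i, S (v i) = w i := by
  let v' := Finsupp.linearCombination 𝕜 v
  let w' := Finsupp.linearCombination 𝕜 w
  have hdense : DenseRange v' := by
    rwa [← Finsupp.range_linearCombination] at hv
  have hinner (c : ι →₀ 𝕜) : inner 𝕜 (w' c) (w' c) = inner 𝕜 (v' c) (v' c) := by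
    simp only [v', w', Finsupp.linearCombination_apply, Finsupp.sum_inner, Finsupp.inner_sum,
      inner_smul_left, inner_smul_right, h]
  have hnorm (c : ι →₀ 𝕜) : ‖w' c‖ ≤ 1 * ‖v' c‖ := by
    rw [one_mul, norm_eq_sqrt_re_inner (𝕜 := 𝕜), hinner, ← norm_eq_sqrt_re_inner]
  refine ⟨w'.extendOfNorm v', fun i => ?_⟩
  simpa [v', w'] using LinearMap.extendOfNorm_eq (f := w') hdense ⟨1, hnorm⟩ (Finsupp.single i 1)

theorem exists_clm_of_inner_apply_eq {X : Type*} [AddCommGroup X] [Module 𝕜 X]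
    (j : X →ₗ[𝕜] E →ₗ[𝕜] F) {T : X → E →L[𝕜] E}
    (h : ∀ x v, inner 𝕜 (j x v) (j x v) = inner 𝕜 v (T x v)) :
    ∃ V : X →ₗ[𝕜] E →L[𝕜] F, ∀ x v, V x v = j x v := by
  have bound (x : X) (v : E) : ‖j x v‖ ≤ √‖T x‖ * ‖v‖ := by
    refine le_of_sq_le_sq ?_ (by positivity)
    calc ‖j x v‖ ^ 2 = ‖inner 𝕜 v (T x v)‖ := by rw [← h, inner_self_eq_norm_sq_to_K]; simp
      _ ≤ ‖v‖ * (‖T x‖ * ‖v‖) := (norm_inner_le_norm _ _).trans (by gcongr; exact le_opNorm _ _)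
      _ = (√‖T x‖ * ‖v‖) ^ 2 := by rw [mul_pow, Real.sq_sqrt (norm_nonneg _)]; ring
  exact ⟨{
    toFun x := (j x).mkContinuous _ (bound x)
    map_add' x y := by ext v; simp
    map_smul' c x := by ext v; simp }, fun x v => rfl⟩

variable [CompleteSpace E] [CompleteSpace F]

theorem jointlyTotal_of_forall_adjoint_apply_eq_zero {V : ι → E →L[𝕜] F}
    (h : ∀ w, (∀ i, (V i).adjoint w = 0) → w = 0) : JointlyTotal V := by
  rw [JointlyTotal, Submodule.dense_iff_topologicalClosure_eq_top,
    Submodule.topologicalClosure_eq_top_iff, Submodule.eq_bot_iff]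
  refine fun w hw => h w fun i => ext_inner_left 𝕜 fun v => ?_
  rw [adjoint_inner_right, inner_zero_right]
  exact hw _ (Submodule.subset_span ⟨(i, v), rfl⟩)

theorem JointlyTotal.ext_adjoint [CompleteSpace G] {V : ι → E →L[𝕜] F} (hV : JointlyTotal V)
    {T T' : G →L[𝕜] F} (h : ∀ i, (V i).adjoint ∘L T = (V i).adjoint ∘L T') : T = T' := by
  refine adjoint.injective (hV.ext fun i => adjoint.injective ?_)
  simpa only [adjoint_comp, adjoint_adjoint] using h i

theorem JointlyTotal.exists_comp_eq [CompleteSpace G] {V : ι → E →L[𝕜] F} {W : ι → E →L[𝕜] G}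
    (hV : JointlyTotal V)
    (h : ∀ i k, (V i).adjoint ∘L V k = (W i).adjoint ∘L W k) :
    ∃ S : F →L[𝕜] G, ∀ i, S ∘L V i = W i := by
  obtain ⟨S, hS⟩ := exists_clm_of_inner_eq (𝕜 := 𝕜) (w := fun p : ι × E => W p.1 p.2) hV
    fun p q => by
      rw [← adjoint_inner_right, ← adjoint_inner_right]
      exact congrArg (inner 𝕜 p.2) (DFunLike.congr_fun (h p.1 q.1) q.2)
  exact ⟨S, fun i => ContinuousLinearMap.ext fun v => hS (i, v)⟩

end InnerProduct

section Intertwiner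

theorem mem_span_inter_unitary {A : Type*} [CStarAlgebra A] {S : StarSubalgebra ℂ A}
    (hS : IsClosed (S : Set A)) {a : A} (ha : a ∈ S) :
    a ∈ Submodule.span ℂ ((S : Set A) ∩ unitary A) := by
  have hspan : (⟨a, ha⟩ : S) ∈ Submodule.span ℂ (unitary S : Set S) := by
    rw [CStarAlgebra.span_unitary]
    trivial
  have himage : S.subtype '' (unitary S : Set S) ⊆ (S : Set A) ∩ unitary A := by
    rintro _ ⟨u, hu, rfl⟩
    exact ⟨u.2, Unitary.mem_iff.2 ((Unitary.mem_iff.1 hu).imp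
      (congrArg Subtype.val) (congrArg Subtype.val))⟩
  refine Submodule.span_mono himage ?_
  have := Submodule.mem_map_of_mem (f := S.subtype.toLinearMap) hspan
  rwa [Submodule.map_span] at this

variable {ι E F : Type*} [NormedAddCommGroup E] [InnerProductSpace ℂ E] [CompleteSpace E]
  [NormedAddCommGroup F] [InnerProductSpace ℂ F] [CompleteSpace F]

theorem exists_comp_adjoint_eq_adjoint_comp_of_isometry {V : ι → E →L[ℂ] F}
    (hV : JointlyTotal fun i => (V i).adjoint) {U : F →L[ℂ] F} (hU : star U * U = 1)
    (hcomm : ∀ i k, Commute (V i ∘L (V k).adjoint) U) :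
    ∃ S : E →L[ℂ] E, ∀ i, S ∘L (V i).adjoint = (V i).adjoint ∘L U := by
  refine hV.exists_comp_eq fun i k => ?_
  calc (V i).adjoint.adjoint ∘L (V k).adjoint
      = star U * U * (V i ∘L (V k).adjoint) := by rw [hU, one_mul, adjoint_adjoint]
    _ = star U * ((V i ∘L (V k).adjoint) * U) := by rw [(hcomm i k).eq, mul_assoc]
    _ = ((V i).adjoint ∘L U).adjoint ∘L (V k).adjoint ∘L U := by
        rw [adjoint_comp, adjoint_adjoint, star_eq_adjoint]
        rfl

/-- The operators commuting with all `V i (V k)†` form a C*-algebra, which is spanned by its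
unitaries. -/
theorem exists_comp_adjoint_eq_adjoint_comp {V : ι → E →L[ℂ] F}
    (hV : JointlyTotal fun i => (V i).adjoint) {T : F →L[ℂ] F}
    (hT : ∀ i k, Commute (V i ∘L (V k).adjoint) T) :
    ∃ S : E →L[ℂ] E, ∀ i, S ∘L (V i).adjoint = (V i).adjoint ∘L T := by
  let A : StarSubalgebra ℂ (F →L[ℂ] F) :=
    StarSubalgebra.centralizer ℂ (range fun p : ι × ι => V p.1 ∘L (V p.2).adjoint)
  have hA : IsClosed (A : Set (F →L[ℂ] F)) := by
    rw [StarSubalgebra.coe_centralizer]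
    exact Set.isClosed_centralizer _
  have hTA : T ∈ A := by
    rw [StarSubalgebra.mem_centralizer_iff]
    rintro _ ⟨⟨i, k⟩, rfl⟩
    refine ⟨hT i k, ?_⟩
    simpa only [star_eq_adjoint, adjoint_comp, adjoint_adjoint] using (hT k i).eq
  refine Submodule.span_induction (p := fun a _ => ∃ S : E →L[ℂ] E,
    ∀ i, S ∘L (V i).adjoint = (V i).adjoint ∘L a) ?_ ?_ ?_ ?_ (mem_span_inter_unitary hA hTA)
  · exact fun u hu => exists_comp_adjoint_eq_adjoint_comp_of_isometry hV
      (Unitary.mem_iff.1 hu.2).1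
      fun i k => ((StarSubalgebra.mem_centralizer_iff ℂ).1 hu.1 _ ⟨(i, k), rfl⟩).1
  · exact ⟨0, fun i => by rw [zero_comp, comp_zero]⟩
  · rintro a b _ _ ⟨S, hS⟩ ⟨S', hS'⟩
    exact ⟨S + S', fun i => by rw [add_comp, hS, hS', ← comp_add]⟩
  · rintro c a _ ⟨S, hS⟩
    exact ⟨c • S, fun i => by rw [smul_comp, hS, ← comp_smul]⟩

end Intertwiner

section WeakOperatorTopology

variable {α : Type*} {H K : HilbS}

theorem tendsto_wot_iff {l : Filter α} {f : α → B H} {T : B H} :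
    Tendsto f l (@nhds _ (wotTop H) T) ↔
      ∀ ξ η : H.carrier, Tendsto (fun a => ⟪ξ, f a η⟫) l (𝓝 ⟪ξ, T η⟫) := by
  rw [wotTop, nhds_induced, tendsto_comap_iff, tendsto_pi_nhds]
  exact ⟨fun h ξ η => h (ξ, η), fun h p => h p.1 p.2⟩

theorem tendsto_wot_of_dense_span {S : Set H.carrier}
    (hS : Dense (Submodule.span ℂ S : Set H.carrier)) {l : Filter α} {T : α → B H} {T₀ : B H}
    {C : ℝ≥0} (hC : ∀ᶠ a in l, ‖T a‖₊ ≤ C)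
    (h : ∀ v ∈ S, ∀ w ∈ S, Tendsto (fun a => ⟪v, T a w⟫) l (𝓝 ⟪v, T₀ w⟫)) :
    Tendsto T l (@nhds _ (wotTop H) T₀) := by
  refine tendsto_wot_iff.2 fun v w => ?_
  have right (v) (hv : v ∈ S) : Tendsto (fun a => ⟪v, T a w⟫) l (𝓝 ⟪v, T₀ w⟫) := by
    refine tendsto_apply_of_dense_span (T := fun a => innerSL ℂ v ∘L T a)
      (T₀ := innerSL ℂ v ∘L T₀) (C := ‖v‖₊ * C) hS ?_ (h v hv) w
    filter_upwards [hC] with a ha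
    refine (opNNNorm_comp_le _ _).trans (mul_le_mul' ?_ ha)
    exact (innerSL_apply_norm ℂ v).le
  refine tendsto_apply_of_dense_span (T := fun a => innerSLFlip ℂ (T a w))
    (T₀ := innerSLFlip ℂ (T₀ w)) (C := C * ‖w‖₊) hS ?_ right v
  filter_upwards [hC] with a ha
  refine (opNorm_le_bound _ (by positivity) fun u => ?_ :
    ‖innerSLFlip ℂ (T a w)‖ ≤ C * ‖w‖)
  calc ‖⟪u, T a w⟫‖ ≤ ‖u‖ * ‖T a w‖ := norm_inner_le_norm _ _
    _ ≤ ‖u‖ * (C * ‖w‖) := by gcongr; exact le_of_opNorm_le _ ha w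
    _ = C * ‖w‖ * ‖u‖ := mul_comm _ _

theorem NormalOn.continuousOn_inner {f : B H → B K} {M : Set (B H)} (hf : NormalOn f M) (r : ℝ)
    (ξ η : K.carrier) :
    @ContinuousOn _ _ (wotTop H) _ (fun a => ⟪ξ, f a η⟫) (M ∩ Metric.closedBall 0 r) :=
  fun a ha => tendsto_wot_iff.1 (hf r a ha) ξ η

theorem normalOn_of_dense_span {f : B H → B K} {M : Set (B H)} {S : Set K.carrier}
    (hS : Dense (Submodule.span ℂ S : Set K.carrier)) (hf : ∀ a ∈ M, ‖f a‖ ≤ ‖a‖)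
    (h : ∀ r : ℝ, ∀ v ∈ S, ∀ w ∈ S, @ContinuousOn _ _ (wotTop H) _ (fun a => ⟪v, f a w⟫)
      (M ∩ Metric.closedBall 0 r)) : NormalOn f M := by
  intro r a ha
  refine tendsto_wot_of_dense_span (C := r.toNNReal) hS ?_ fun v hv w hw => h r v hv w hw a ha
  filter_upwards [@self_mem_nhdsWithin _ (wotTop H) a (M ∩ Metric.closedBall 0 r)] with b hb
  rw [← NNReal.coe_le_coe]
  exact ((hf b hb.1).trans (mem_closedBall_zero_iff.1 hb.2)).trans (Real.le_coe_toNNReal r)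

theorem inner_apply_eq_zero_of_mem_spanClosure {S : Set (B H)} {ξ η : H.carrier}
    (h : ∀ z ∈ S, ⟪ξ, z η⟫ = 0) {z : B H} (hz : z ∈ spanClosure S) : ⟪ξ, z η⟫ = 0 := by
  have hcont : @Continuous _ _ (wotTop H) _ fun T : B H => ⟪ξ, T η⟫ :=
    (@continuous_iff_continuousAt _ _ (wotTop H) _ _).2
      fun T => tendsto_wot_iff.1 (tendsto_id (α := B H)) ξ η
  have hclosed : @IsClosed _ (wotTop H) {T : B H | ⟪ξ, T η⟫ = 0} :=
    @IsClosed.preimage _ _ (wotTop H) _ _ hcont _ isClosed_singleton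
  refine (@closure_minimal _ (wotTop H) _ _ ?_ hclosed) hz
  exact (Submodule.span_le (p := LinearMap.ker
    (innerSL ℂ ξ ∘L ContinuousLinearMap.apply ℂ H.carrier η).toLinearMap)).2 h

theorem jointlyTotal_of_one_mem_spanClosure {S : Set (B H)} (h : 1 ∈ spanClosure S) :
    JointlyTotal fun s : S => (s : B H) := by
  refine jointlyTotal_of_forall_adjoint_apply_eq_zero fun w hw => ?_
  refine inner_self_eq_zero.1 (inner_apply_eq_zero_of_mem_spanClosure (ξ := w) (η := w) ?_ h)
  intro s hs
  rw [← adjoint_inner_left, hw ⟨s, hs⟩, inner_zero_left]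

end WeakOperatorTopology

section VonNeumannAlgebra

variable {H K : HilbS} {M : Set (B H)}

/-- A von Neumann algebra as a unital C*-subalgebra of `B(H)`. -/
def IsVNA.toStarSubalgebra (hM : IsVNA M) : StarSubalgebra ℂ (B H) where
  toSubalgebra := (Subalgebra.centralizer ℂ (commutant M)).copy M hM.2.symm
  star_mem' := hM.1 _

instance IsVNA.isClosed_toStarSubalgebra (hM : IsVNA M) :
    IsClosed (hM.toStarSubalgebra : Set (B H)) := by
  change IsClosed M
  rw [← hM.2]
  exact Set.isClosed_centralizer _

/-- A star homomorphism on a von Neumann algebra in bundled form. The unit condition is forgotten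
since the images of the units are arbitrary. -/
def IsStarHomOn.toNonUnitalStarAlgHom {f : B H → B K} {e : B H} {e' : B K}
    (hf : IsStarHomOn M e e' f) (hM : IsVNA M) : hM.toStarSubalgebra →⋆ₙₐ[ℂ] B K where
  toFun a := f a
  map_smul' c a := hf.map_smul c a a.2
  map_zero' := by
    simpa only [zero_smul] using! hf.map_smul 0 0 hM.toStarSubalgebra.zero_mem
  map_add' a b := hf.map_add a a.2 b b.2
  map_mul' a b := hf.map_mul a a.2 b b.2
  map_star' a := hf.map_star a a.2

theorem IsStarHomOn.injOn_of_forall_eq_zero {f : B H → B K} {e : B H} {e' : B K}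
    (hf : IsStarHomOn M e e' f) (hM : IsVNA M) (h : ∀ a ∈ M, f a = 0 → a = 0) : InjOn f M := by
  have hinj : Function.Injective (hf.toNonUnitalStarAlgHom hM) :=
    (injective_iff_map_eq_zero _).2 fun a ha => Subtype.ext (h a a.2 ha)
  exact fun a ha b hb hab => congrArg Subtype.val (@hinj ⟨a, ha⟩ ⟨b, hb⟩ hab)

/-- A star antihomomorphism on a von Neumann algebra as a bundled homomorphism into the opposite
algebra. -/
def IsStarAntiHomOn.toNonUnitalStarAlgHom {f : B H → B K} {e : B H} {e' : B K}
    (hf : IsStarAntiHomOn M e e' f) (hM : IsVNA M) :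
    hM.toStarSubalgebra →⋆ₙₐ[ℂ] (B K)ᵐᵒᵖ where
  toFun a := MulOpposite.op (f a)
  map_smul' c a := congrArg MulOpposite.op (hf.map_smul c a a.2)
  map_zero' := congrArg MulOpposite.op <| by
    simpa only [zero_smul] using! hf.map_smul 0 0 hM.toStarSubalgebra.zero_mem
  map_add' a b := congrArg MulOpposite.op (hf.map_add a a.2 b b.2)
  map_mul' a b := congrArg MulOpposite.op (hf.map_mul a a.2 b b.2)
  map_star' a := congrArg MulOpposite.op (hf.map_star a a.2)

theorem IsStarHomOn.norm_apply_le {f : B H → B K} {e : B H} {e' : B K}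
    (hf : IsStarHomOn M e e' f) (hM : IsVNA M) {a : B H} (ha : a ∈ M) : ‖f a‖ ≤ ‖a‖ :=
  NonUnitalStarAlgHom.norm_apply_le (A := hM.toStarSubalgebra) (B := B K)
    (hf.toNonUnitalStarAlgHom hM) (⟨a, ha⟩ : hM.toStarSubalgebra)

theorem IsStarHomOn.norm_apply_eq {f : B H → B K} {e : B H} {e' : B K}
    (hf : IsStarHomOn M e e' f) (hM : IsVNA M) (hinj : InjOn f M) {a : B H} (ha : a ∈ M) :
    ‖f a‖ = ‖a‖ :=
  NonUnitalStarAlgHom.norm_map (A := hM.toStarSubalgebra) (B := B K)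
    (hf.toNonUnitalStarAlgHom hM) (fun x y h => Subtype.ext (hinj x.2 y.2 h))
    (⟨a, ha⟩ : hM.toStarSubalgebra)

theorem IsStarAntiHomOn.norm_apply_le {f : B H → B K} {e : B H} {e' : B K}
    (hf : IsStarAntiHomOn M e e' f) (hM : IsVNA M) {a : B H} (ha : a ∈ M) : ‖f a‖ ≤ ‖a‖ :=
  NonUnitalStarAlgHom.norm_apply_le (A := hM.toStarSubalgebra) (B := (B K)ᵐᵒᵖ)
    (hf.toNonUnitalStarAlgHom hM) (⟨a, ha⟩ : hM.toStarSubalgebra)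

end VonNeumannAlgebra

section Nondegeneracy

open scoped CStarAlgebra

theorem tendsto_apply_of_isIncreasingApproximateUnit {A H : Type*} [NonUnitalCStarAlgebra A]
    [PartialOrder A] [StarOrderedRing A] [NormedAddCommGroup H] [InnerProductSpace ℂ H]
    [CompleteSpace H] {l : Filter A} (hl : l.IsIncreasingApproximateUnit)
    {φ : A →⋆ₙₐ[ℂ] H →L[ℂ] H} (hφ : JointlyTotal φ) (v : H) :
    Tendsto (φ · v) l (𝓝 v) := by
  refine tendsto_apply_of_dense_span (T := φ) (T₀ := .id ℂ H) (C := 1) hφ ?_ ?_ v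
  · filter_upwards [hl.eventually_norm] with a ha
    exact (NonUnitalStarAlgHom.norm_apply_le φ a).trans ha
  · rintro _ ⟨⟨a, w⟩, rfl⟩
    have hφ_cont : Continuous φ := map_continuous φ
    have hmul : Tendsto (fun e => φ (e * a)) l (𝓝 (φ a)) :=
      (hφ_cont.tendsto a).comp (hl.tendsto_mul_right a)
    simpa only [map_mul] using! ((ContinuousLinearMap.apply ℂ H w).continuous.tendsto _).comp hmul

/-- The elements which, together with their adjoints, annihilate a vector `ζ`. Requiring both makes
this a C*-algebra, so that it has an approximate unit. -/
def vectorAnnihilator {A H : Type*} [NonUnitalRing A] [StarRing A] [Module ℂ A] [StarModule ℂ A]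
    [NormedAddCommGroup H] [InnerProductSpace ℂ H] [CompleteSpace H]
    (φ : A →⋆ₙₐ[ℂ] H →L[ℂ] H) (ζ : H) : NonUnitalStarSubalgebra ℂ A where
  carrier := {a | φ a ζ = 0 ∧ φ (star a) ζ = 0}
  zero_mem' := by simp
  add_mem' := by
    rintro a b ⟨ha, ha'⟩ ⟨hb, hb'⟩
    simp [ha, ha', hb, hb']
  mul_mem' := by
    rintro a b ⟨-, ha'⟩ ⟨hb, -⟩
    simp [hb, ha']
  smul_mem' := by
    rintro c a ⟨ha, ha'⟩
    simp [ha, ha']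
  star_mem' := by
    rintro a ⟨ha, ha'⟩
    exact ⟨ha', by rwa [star_star]⟩

theorem isClosed_vectorAnnihilator {A H : Type*} [NonUnitalCStarAlgebra A] [NormedAddCommGroup H]
    [InnerProductSpace ℂ H] [CompleteSpace H] (φ : A →⋆ₙₐ[ℂ] H →L[ℂ] H) (ζ : H) :
    IsClosed (vectorAnnihilator φ ζ : Set A) := by
  have hcont : Continuous fun a => φ a ζ := (map_continuous φ).clm_apply continuous_const
  exact (isClosed_singleton.preimage hcont).inter
    (isClosed_singleton.preimage (hcont.comp continuous_star))

/-- Since `π` is only known to be WOT-continuous on bounded sets, `1` has to be reached by a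
bounded net: an approximate unit of the C*-algebra annihilating `ζ`, which contains `S`. -/
theorem IsStarHomOn.eq_zero_of_forall_apply_eq_zero {H K : HilbS} {M : Set (B H)} {π : B H → B K}
    (hπ : IsStarHomOn M 1 1 π) (hM : IsVNA M) (hnormal : NormalOn π M) {S : Set (B H)}
    (hSM : S ⊆ M) (hstar : ∀ s ∈ S, star s ∈ S) (hS : 1 ∈ spanClosure S) {ζ : K.carrier}
    (hζ : ∀ s ∈ S, π s ζ = 0) : ζ = 0 := by
  let N := vectorAnnihilator (hπ.toNonUnitalStarAlgHom hM) ζ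
  have : IsClosed (N : Set hM.toStarSubalgebra) := isClosed_vectorAnnihilator _ ζ
  let _ : PartialOrder N := CStarAlgebra.spectralOrder N
  have : StarOrderedRing N := CStarAlgebra.spectralOrderedRing N
  have hl := CStarAlgebra.increasingApproximateUnit N
  set l := CStarAlgebra.approximateUnit N
  let φ : N →⋆ₙₐ[ℂ] B H := (NonUnitalStarSubalgebraClass.subtype hM.toStarSubalgebra).comp
    (NonUnitalStarSubalgebraClass.subtype N)
  have hφ : JointlyTotal φ := by
    refine (jointlyTotal_of_one_mem_spanClosure hS).mono (Submodule.span_mono ?_)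
    rintro _ ⟨⟨s, v⟩, rfl⟩
    exact ⟨(⟨⟨s, hSM s.2⟩, hζ s s.2, hζ _ (hstar s s.2)⟩, v), rfl⟩
  have hball : ∀ᶠ e in l, φ e ∈ M ∩ Metric.closedBall 0 1 := by
    filter_upwards [hl.eventually_norm] with e he
    exact ⟨e.1.2, mem_closedBall_zero_iff.2 he⟩
  have hlim : Tendsto φ l (@nhdsWithin _ (wotTop H) 1 (M ∩ Metric.closedBall 0 1)) := by
    refine tendsto_inf.2 ⟨tendsto_wot_iff.2 fun ξ η => ?_, tendsto_principal.2 hball⟩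
    exact ((innerSL ℂ ξ).continuous.tendsto _).comp
      (tendsto_apply_of_isIncreasingApproximateUnit hl hφ η)
  have hone : (1 : B H) ∈ M ∩ Metric.closedBall 0 1 :=
    ⟨hM.toStarSubalgebra.one_mem, mem_closedBall_zero_iff.2 norm_id_le⟩
  have hcont : Tendsto (fun a => ⟪ζ, π a ζ⟫)
      (@nhdsWithin _ (wotTop H) 1 (M ∩ Metric.closedBall 0 1)) (𝓝 ⟪ζ, π 1 ζ⟫) :=
    hnormal.continuousOn_inner 1 ζ ζ 1 hone
  have hinner : Tendsto (fun e => ⟪ζ, π (φ e) ζ⟫) l (𝓝 ⟪ζ, π 1 ζ⟫) := hcont.comp hlim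
  have hzero (e : N) : ⟪ζ, π (φ e) ζ⟫ = 0 := by
    rw [show π (φ e) ζ = 0 from e.2.1, inner_zero_right]
  simp only [hzero, hπ.map_unit, one_apply_eq_self] at hinner
  exact inner_self_eq_zero.1 (tendsto_nhds_unique hinner tendsto_const_nhds)

end Nondegeneracy

section InteriorTensor

theorem EquivBimodule.eq_zero_of_forall_actL_eq_zero {Ha Hb : HilbS} {As : Set (B Ha)}
    {Bs : Set (B Hb)} (E : EquivBimodule As Bs) (hA : IsVNA As) {a : B Ha} (ha : a ∈ As)
    (h : ∀ x, E.actL a x = 0) : a = 0 := by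
  have hone : 1 ∈ spanClosure {z | ∃ x y, z = E.ipA x y} := by
    rw [E.denseA]
    exact hA.toStarSubalgebra.one_mem
  refine (jointlyTotal_of_one_mem_spanClosure hone).ext ?_
  rintro ⟨_, x, y, rfl⟩
  calc a * E.ipA x y = E.ipA ((0 : ℂ) • x) y := by rw [← E.ipA_actL a ha, h, zero_smul]
    _ = 0 ∘L E.ipA x y := by rw [E.ipA_smul_left, zero_smul, zero_comp]

variable {Ha Hb Hc K L : HilbS} {As : Set (B Ha)} {Bs : Set (B Hb)} {Cs : Set (B Hc)}
  {E : EquivBimodule As Bs} {π : B Hb → B K} {ρ : B Hc → B K}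
  {V : E.X →ₗ[ℂ] K.carrier →L[ℂ] L.carrier} {πT : B Ha → B L} {ρT : B Hc → B L}

theorem injOn_of_comp_eq_comp {ι : Type*} {V : ι → K.carrier →L[ℂ] L.carrier}
    (hV : JointlyTotal fun x => (V x).adjoint) (hinj : InjOn ρ Cs)
    (hρT : ∀ c ∈ Cs, ∀ x, ρT c ∘L V x = V x ∘L ρ c) : InjOn ρT Cs := by
  refine fun c hc d hd hcd => hinj hc hd (hV.ext_adjoint fun x => ?_)
  rw [adjoint_adjoint, ← hρT c hc, ← hρT d hd, hcd]

/-- `L` is the interior tensor product `X ⊗_B K`, given by its creation operators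
`V x : ξ ↦ x ⊗ ξ`. The inner product on elementary tensors is the identity
`(V x)† V y = π ⟨x, y⟩_B`. -/
structure IsInteriorTensor (E : EquivBimodule As Bs) (π : B Hb → B K)
    (V : E.X →ₗ[ℂ] K.carrier →L[ℂ] L.carrier) : Prop where
  map_actR : ∀ x, ∀ b ∈ Bs, V (E.actR x b) = V x ∘L π b
  adjoint_comp_eq : ∀ x y, (V x).adjoint ∘L V y = π (E.ipB x y)
  jointlyTotal : JointlyTotal V

theorem exists_isInteriorTensor (j : E.X →ₗ[ℂ] K.carrier →ₗ[ℂ] L.carrier)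
    (balanced : ∀ x, ∀ b ∈ Bs, ∀ ξ, j (E.actR x b) ξ = j x (π b ξ))
    (inner_eq : ∀ x y ξ η, ⟪j x ξ, j y η⟫ = ⟪ξ, π (E.ipB x y) η⟫)
    (dense : (Submodule.span ℂ {v | ∃ x ξ, v = j x ξ}).topologicalClosure = ⊤) :
    ∃ V : E.X →ₗ[ℂ] K.carrier →L[ℂ] L.carrier,
      IsInteriorTensor E π V ∧ ∀ x ξ, V x ξ = j x ξ := by
  obtain ⟨V, hV⟩ := exists_clm_of_inner_apply_eq j fun x ξ => inner_eq x x ξ ξ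
  refine ⟨V, ⟨fun x b hb => ?_, fun x y => ?_, ?_⟩, hV⟩
  · ext ξ
    rw [comp_apply, hV, hV, balanced x b hb]
  · ext ξ
    refine ext_inner_left ℂ fun η => ?_
    rw [comp_apply, adjoint_inner_right, hV, hV, inner_eq]
  · refine (Submodule.dense_iff_topologicalClosure_eq_top.2 dense).mono (Submodule.span_mono ?_)
    rintro _ ⟨x, ξ, rfl⟩
    exact ⟨(x, ξ), hV x ξ⟩

namespace IsInteriorTensor

theorem eq_zero_of_map_eq_zero {e : B Hb} {e' : B K} (hV : IsInteriorTensor E π V) (hB : IsVNA Bs)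
    (hπ : IsStarHomOn Bs e e' π) (hinj : InjOn π Bs) {x : E.X} (hx : V x = 0) : x = 0 := by
  refine E.ipB_defin x (norm_eq_zero.1 ?_)
  rw [← hπ.norm_apply_eq hB hinj (E.ipB_mem x x), ← hV.adjoint_comp_eq, hx, comp_zero, norm_zero]

theorem comp_adjoint_eq (hV : IsInteriorTensor E π V)
    (hπT : ∀ a ∈ As, ∀ x, πT a ∘L V x = V (E.actL a x)) (x y : E.X) :
    V x ∘L (V y).adjoint = πT (E.ipA x y) := by
  refine hV.jointlyTotal.ext fun z => ?_
  rw [comp_assoc, hV.adjoint_comp_eq, ← hV.map_actR x _ (E.ipB_mem y z), ← E.compat,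
    hπT _ (E.ipA_mem x y)]

theorem jointlyTotal_adjoint (hV : IsInteriorTensor E π V) (hB : IsVNA Bs)
    (hπ : IsStarHomOn Bs 1 1 π) (hnormal : NormalOn π Bs) :
    JointlyTotal fun x => (V x).adjoint := by
  refine jointlyTotal_of_forall_adjoint_apply_eq_zero fun ζ hζ => ?_
  simp only [adjoint_adjoint] at hζ
  refine hπ.eq_zero_of_forall_apply_eq_zero hB hnormal
    (S := {z | ∃ x y, z = E.ipB x y}) ?_ ?_ ?_ ?_
  · rintro _ ⟨x, y, rfl⟩
    exact E.ipB_mem x y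
  · rintro _ ⟨x, y, rfl⟩
    exact ⟨y, x, E.ipB_star x y⟩
  · rw [E.denseB]
    exact hB.toStarSubalgebra.one_mem
  · rintro _ ⟨x, y, rfl⟩
    rw [← hV.adjoint_comp_eq, comp_apply, hζ, map_zero]

theorem isStarHomOn (hV : IsInteriorTensor E π V) (hA : IsVNA As)
    (hπT : ∀ a ∈ As, ∀ x, πT a ∘L V x = V (E.actL a x)) : IsStarHomOn As 1 1 πT where
  map_add a ha b hb := hV.jointlyTotal.ext fun x => by
    rw [hπT _ (hA.toStarSubalgebra.add_mem ha hb), E.actL_add' a ha b hb, map_add, add_comp,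
      hπT a ha, hπT b hb]
  map_smul c a ha := hV.jointlyTotal.ext fun x => by
    rw [hπT _ (hA.toStarSubalgebra.smul_mem ha c), E.actL_smul c a ha, map_smul, smul_comp,
      hπT a ha]
  map_mul a ha b hb := hV.jointlyTotal.ext fun x => by
    rw [hπT _ (hA.toStarSubalgebra.mul_mem ha hb), E.actL_mul a ha b hb, mul_def, comp_assoc,
      hπT b hb, hπT a ha]
  map_star a ha := hV.jointlyTotal.ext fun y => hV.jointlyTotal.ext_adjoint fun x => by
    rw [hπT _ (hA.1 a ha), hV.adjoint_comp_eq, ← E.ipB_actL a ha, ← hV.adjoint_comp_eq,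
      ← hπT a ha, adjoint_comp, comp_assoc, star_eq_adjoint]
  map_unit := hV.jointlyTotal.ext fun x => by
    rw [hπT _ hA.toStarSubalgebra.one_mem, E.actL_one]
    rfl

theorem isStarAntiHomOn (hV : IsInteriorTensor E π V) (hC : IsVNA Cs)
    (hρ : IsStarAntiHomOn Cs 1 1 ρ) (hcomm : ∀ b ∈ Bs, ∀ c ∈ Cs, Commute (π b) (ρ c))
    (hρT : ∀ c ∈ Cs, ∀ x, ρT c ∘L V x = V x ∘L ρ c) : IsStarAntiHomOn Cs 1 1 ρT where
  map_add a ha b hb := hV.jointlyTotal.ext fun x => by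
    rw [hρT _ (hC.toStarSubalgebra.add_mem ha hb), hρ.map_add a ha b hb, comp_add, add_comp,
      hρT a ha, hρT b hb]
  map_smul c a ha := hV.jointlyTotal.ext fun x => by
    rw [hρT _ (hC.toStarSubalgebra.smul_mem ha c), hρ.map_smul c a ha, comp_smul, smul_comp,
      hρT a ha]
  map_mul a ha b hb := hV.jointlyTotal.ext fun x => by
    rw [hρT _ (hC.toStarSubalgebra.mul_mem ha hb), hρ.map_mul a ha b hb, mul_def, mul_def,
      comp_assoc, hρT a ha, ← comp_assoc, ← comp_assoc, hρT b hb]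
  map_star c hc := hV.jointlyTotal.ext fun y => hV.jointlyTotal.ext_adjoint fun x => by
    have hcomm' : π (E.ipB x y) ∘L ρ (star c) = ρ (star c) ∘L π (E.ipB x y) :=
      hcomm _ (E.ipB_mem x y) _ (hC.1 c hc)
    calc (V x).adjoint ∘L ρT (star c) ∘L V y
        = (V x).adjoint ∘L V y ∘L ρ (star c) := by rw [hρT _ (hC.1 c hc)]
      _ = (V x ∘L ρ c).adjoint ∘L V y := by
        rw [← comp_assoc, hV.adjoint_comp_eq, hcomm', adjoint_comp, comp_assoc,
          hV.adjoint_comp_eq, hρ.map_star c hc, star_eq_adjoint]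
      _ = (V x).adjoint ∘L star (ρT c) ∘L V y := by
        rw [← hρT c hc, adjoint_comp, comp_assoc, star_eq_adjoint]
  map_unit := hV.jointlyTotal.ext fun x => by
    rw [hρT _ hC.toStarSubalgebra.one_mem, hρ.map_unit]
    rfl

theorem adjoint_comp_comp_eq (hV : IsInteriorTensor E π V)
    (hπT : ∀ a ∈ As, ∀ x, πT a ∘L V x = V (E.actL a x)) {a : B Ha} (ha : a ∈ As) (x y : E.X) :
    (V x).adjoint ∘L πT a ∘L V y = π (E.ipB x (E.actL a y)) := by
  rw [hπT a ha, hV.adjoint_comp_eq]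

theorem norm_ipB_actL_le {e : B Hb} {e' : B K} (hV : IsInteriorTensor E π V) (hA : IsVNA As)
    (hB : IsVNA Bs) (hπ : IsStarHomOn Bs e e' π) (hinj : InjOn π Bs)
    (hπT : ∀ a ∈ As, ∀ x, πT a ∘L V x = V (E.actL a x)) {a : B Ha} (ha : a ∈ As) (x y : E.X) :
    ‖E.ipB x (E.actL a y)‖ ≤ ‖V x‖ * (‖a‖ * ‖V y‖) := by
  calc ‖E.ipB x (E.actL a y)‖ = ‖(V x).adjoint ∘L πT a ∘L V y‖ := by
        rw [hV.adjoint_comp_comp_eq hπT ha, hπ.norm_apply_eq hB hinj (E.ipB_mem _ _)]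
    _ ≤ ‖(V x).adjoint‖ * (‖πT a‖ * ‖V y‖) := (opNorm_comp_le _ _).trans <| by
        gcongr
        exact opNorm_comp_le _ _
    _ ≤ ‖V x‖ * (‖a‖ * ‖V y‖) := by
        rw [LinearIsometryEquiv.norm_map]
        gcongr
        exact (hV.isStarHomOn hA hπT).norm_apply_le hA ha

theorem normalOn_left {e : B Hb} {e' : B K} (hV : IsInteriorTensor E π V) (hA : IsVNA As)
    (hB : IsVNA Bs) (hπ : IsStarHomOn Bs e e' π) (hnormal : NormalOn π Bs) (hinj : InjOn π Bs)
    (hπT : ∀ a ∈ As, ∀ x, πT a ∘L V x = V (E.actL a x)) : NormalOn πT As := by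
  refine normalOn_of_dense_span hV.jointlyTotal
    (fun a ha => (hV.isStarHomOn hA hπT).norm_apply_le hA ha) ?_
  rintro r _ ⟨⟨x, ξ⟩, rfl⟩ _ ⟨⟨y, η⟩, rfl⟩
  have hmaps : MapsTo (fun a => E.ipB x (E.actL a y)) (As ∩ Metric.closedBall 0 r)
      (Bs ∩ Metric.closedBall 0 (‖V x‖ * (r * ‖V y‖))) := by
    rintro a ⟨ha, har⟩
    refine ⟨E.ipB_mem _ _, mem_closedBall_zero_iff.2 ?_⟩
    refine (hV.norm_ipB_actL_le hA hB hπ hinj hπT ha x y).trans ?_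
    gcongr
    exact mem_closedBall_zero_iff.1 har
  refine @ContinuousOn.congr _ _ (wotTop Ha) _ _ _ _ (@ContinuousOn.comp _ _ _ (wotTop Ha)
    (wotTop Hb) _ _ _ _ _ (hnormal.continuousOn_inner _ ξ η) (E.normalL x y r) hmaps) ?_
  intro a ha
  change ⟪V x ξ, πT a (V y η)⟫ = ⟪ξ, π (E.ipB x (E.actL a y)) η⟫
  rw [← hV.adjoint_comp_comp_eq hπT ha.1, comp_apply, adjoint_inner_right, comp_apply]

theorem normalOn_right (hV : IsInteriorTensor E π V) (hC : IsVNA Cs)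
    (hρ : IsStarAntiHomOn Cs 1 1 ρ) (hnormal : NormalOn ρ Cs)
    (hcomm : ∀ b ∈ Bs, ∀ c ∈ Cs, Commute (π b) (ρ c))
    (hρT : ∀ c ∈ Cs, ∀ x, ρT c ∘L V x = V x ∘L ρ c) : NormalOn ρT Cs := by
  refine normalOn_of_dense_span hV.jointlyTotal
    (fun c hc => (hV.isStarAntiHomOn hC hρ hcomm hρT).norm_apply_le hC hc) ?_
  rintro r _ ⟨⟨x, ξ⟩, rfl⟩ _ ⟨⟨y, η⟩, rfl⟩
  refine @ContinuousOn.congr _ _ (wotTop Hc) _ _ _ _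
    (hnormal.continuousOn_inner r ((V y).adjoint (V x ξ)) η) fun c hc => ?_
  calc ⟪V x ξ, (ρT c ∘L V y) η⟫ = ⟪V x ξ, V y (ρ c η)⟫ := by rw [hρT c hc.1, comp_apply]
    _ = ⟪(V y).adjoint (V x ξ), ρ c η⟫ := (adjoint_inner_left _ _ _).symm

theorem injOn_left {e : B Hb} {e' : B K} (hV : IsInteriorTensor E π V) (hA : IsVNA As)
    (hB : IsVNA Bs) (hπ : IsStarHomOn Bs e e' π) (hinj : InjOn π Bs)
    (hπT : ∀ a ∈ As, ∀ x, πT a ∘L V x = V (E.actL a x)) : InjOn πT As := by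
  refine (hV.isStarHomOn hA hπT).injOn_of_forall_eq_zero hA fun a ha h => ?_
  refine E.eq_zero_of_forall_actL_eq_zero hA ha fun x => ?_
  refine hV.eq_zero_of_map_eq_zero hB hπ hinj ?_
  rw [← hπT a ha, h, zero_comp]

theorem image_subset_commutant (hV : IsInteriorTensor E π V)
    (hπT : ∀ a ∈ As, ∀ x, πT a ∘L V x = V (E.actL a x))
    (hρT : ∀ c ∈ Cs, ∀ x, ρT c ∘L V x = V x ∘L ρ c) : ρT '' Cs ⊆ commutant (πT '' As) := by
  rintro _ ⟨c, hc, rfl⟩ _ ⟨a, ha, rfl⟩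
  refine hV.jointlyTotal.ext fun x => ?_
  rw [mul_def, mul_def, comp_assoc, comp_assoc, hπT a ha, hρT c hc, hρT c hc, ← comp_assoc,
    hπT a ha]

theorem comp_adjoint_eq_adjoint_actR {e : B Hb} {e' : B K} (hV : IsInteriorTensor E π V)
    (hB : IsVNA Bs) (hπ : IsStarHomOn Bs e e' π) {b : B Hb} (hb : b ∈ Bs) (x : E.X) :
    π b ∘L (V x).adjoint = (V (E.actR x (star b))).adjoint := by
  rw [hV.map_actR x _ (hB.1 b hb), hπ.map_star b hb, adjoint_comp, star_eq_adjoint,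
    adjoint_adjoint]

/-- An operator `T` in the commutant is transported to an operator `S` on `K` satisfying
`S (V x)† = (V x)† T`, and then `T V x = V x S`. -/
theorem commutant_subset_image (hV : IsInteriorTensor E π V) (hB : IsVNA Bs)
    (hπ : IsStarHomOn Bs 1 1 π) (hnormal : NormalOn π Bs)
    (hcomm : commutant (π '' Bs) ⊆ ρ '' Cs)
    (hπT : ∀ a ∈ As, ∀ x, πT a ∘L V x = V (E.actL a x))
    (hρT : ∀ c ∈ Cs, ∀ x, ρT c ∘L V x = V x ∘L ρ c) : commutant (πT '' As) ⊆ ρT '' Cs := by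
  intro T hT
  have htotal := hV.jointlyTotal_adjoint hB hπ hnormal
  have hVT (x y) : Commute (V x ∘L (V y).adjoint) T := by
    rw [hV.comp_adjoint_eq hπT]
    exact hT _ (mem_image_of_mem πT (E.ipA_mem x y))
  obtain ⟨S, hS⟩ := exists_comp_adjoint_eq_adjoint_comp htotal hVT
  have hSmem : S ∈ commutant (π '' Bs) := by
    rintro _ ⟨b, hb, rfl⟩
    refine htotal.ext fun x => ?_
    rw [mul_def, mul_def, comp_assoc, comp_assoc, hS, ← comp_assoc,
      hV.comp_adjoint_eq_adjoint_actR hB hπ hb, hS]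
  obtain ⟨c, hc, rfl⟩ := hcomm hSmem
  refine ⟨c, hc, hV.jointlyTotal.ext fun x => ?_⟩
  rw [hρT c hc]
  refine htotal.ext fun y => ?_
  rw [comp_assoc, hS, ← comp_assoc, comp_assoc T]
  exact (hVT x y).eq

end IsInteriorTensor

end InteriorTensor

/-- Proposition 2.9: if `X` is an equivalence `A`-`B`-bimodule and
`(K, π_K, ρ_K)` is a Morita `B`-`C`-correspondence, then the `A`-`C`-correspondence
`X ⊗_B K` (realized on any Hilbert space `L` via a map `j` with the defining inner
product identity, balancedness and density, and with the actions `π_⊠(a) (x ⊗ ξ) =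
(a x) ⊗ ξ`, `ρ_⊠(c)(x ⊗ ξ) = x ⊗ ρ_K(c) ξ`) is a Morita `A`-`C`-correspondence. -/
theorem statement2 {Ha Hb Hc : HilbS} (As : Set (B Ha)) (Bs : Set (B Hb))
    (Cs : Set (B Hc)) (hA : IsVNA As) (hB : IsVNA Bs) (hC : IsVNA Cs)
    (h1A : (1 : B Ha) ∈ As) (h1B : (1 : B Hb) ∈ Bs) (h1C : (1 : B Hc) ∈ Cs)
    (E : EquivBimodule As Bs)
    (K : HilbS) (πK : B Hb → B K) (ρK : B Hc → B K) (hK : MoritaCorr Bs Cs K πK ρK)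
    (L : HilbS) (j : E.X → K.carrier → L.carrier)
    (j_addl : ∀ x y ξ, j (x + y) ξ = j x ξ + j y ξ)
    (j_addr : ∀ x ξ η, j x (ξ + η) = j x ξ + j x η)
    (j_smull : ∀ (c : ℂ) (x ξ), j (c • x) ξ = c • j x ξ)
    (j_smulr : ∀ (c : ℂ) (x ξ), j x (c • ξ) = c • j x ξ)
    (j_balanced : ∀ x, ∀ b ∈ Bs, ∀ ξ, j (E.actR x b) ξ = j x ((πK b) ξ))
    (j_inner : ∀ x y ξ η, ⟪j x ξ, j y η⟫ = ⟪ξ, (πK (E.ipB x y)) η⟫)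
    (j_dense : (Submodule.span ℂ {v : L.carrier | ∃ x ξ, v = j x ξ}).topologicalClosure = ⊤)
    (πT : B Ha → B L) (ρT : B Hc → B L)
    (hπT : ∀ a ∈ As, ∀ x ξ, (πT a) (j x ξ) = j (E.actL a x) ξ)
    (hρT : ∀ c ∈ Cs, ∀ x ξ, (ρT c) (j x ξ) = j x ((ρK c) ξ)) :
    MoritaCorr As Cs L πT ρT := by
  obtain ⟨V, hV, hVj⟩ := exists_isInteriorTensor (LinearMap.mk₂ ℂ j j_addl j_smull j_addr j_smulr)
    j_balanced j_inner j_dense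
  have hleft : ∀ a ∈ As, ∀ x, πT a ∘L V x = V (E.actL a x) := fun a ha x => by
    ext ξ
    simpa only [comp_apply, hVj] using! hπT a ha x ξ
  have hright : ∀ c ∈ Cs, ∀ x, ρT c ∘L V x = V x ∘L ρK c := fun c hc x => by
    ext ξ
    simpa only [comp_apply, hVj] using! hρT c hc x ξ
  have hcomm : ∀ b ∈ Bs, ∀ c ∈ Cs, Commute (πK b) (ρK c) := fun b hb c hc =>
    hK.comm_eq.ge (mem_image_of_mem ρK hc) _ (mem_image_of_mem πK hb)
  exact
    { π_hom := hV.isStarHomOn hA hleft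
      π_normal := hV.normalOn_left hA hB hK.π_hom hK.π_normal hK.π_inj hleft
      π_inj := hV.injOn_left hA hB hK.π_hom hK.π_inj hleft
      ρ_hom := hV.isStarAntiHomOn hC hK.ρ_hom hcomm hright
      ρ_normal := hV.normalOn_right hC hK.ρ_hom hK.ρ_normal hcomm hright
      ρ_inj := injOn_of_comp_eq_comp (hV.jointlyTotal_adjoint hB hK.π_hom hK.π_normal)
        hK.ρ_inj hright
      comm_eq := (hV.commutant_subset_image hB hK.π_hom hK.π_normal hK.comm_eq.le hleft
        hright).antisymm (hV.image_subset_commutant hleft hright) }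

end Paper
end
end

section
/- Let B₁, B₂ be von Neumann algebras and φ: B₁ → B₂ a *-isomorphism. Let X₁ be a right pre-Hilbert B₁-module and X₂ a right pre-Hilbert B₂-module. If κ: X₁ → X₂ is a bounded linear map satisfying κ(x b) = κ(x) φ(b) for all x ∈ X₁ and b ∈ B₁, then there exists a unique bounded linear map κ̄: X̄₁ → X̄₂ between the self-dual completions extending κ; it satisfies ‖κ̄‖ = ‖κ‖ and κ̄(x b) = κ̄(x) φ(b) for all x ∈ X̄₁, b ∈ B₁. Moreover, if κ is an isometric surjection, then so is κ̄. -/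
/-!
Common framework for formalizing "Morita theory for dynamical von Neumann algebras".

We work with concrete von Neumann algebras: subsets of `B(H)` for a complex Hilbert
space `H`, which are star-closed and equal to their double commutant.  Since Mathlib
has no σ-weak topology, we use the weak operator topology; recall that on convex sets
(all sets we close are linear subspaces) the WOT closure coincides with the σ-weak
closure, and a linear map between von Neumann algebras is normal iff it is
WOT-continuous on bounded sets.

Since Mathlib has no Hilbert space tensor product, we quantify over a `TensorTheory`:
a package providing, for bundled Hilbert spaces `H, K`, a Hilbert space `T H K`
together with the maps `a ⊗ b` on operators, `ξ ⊗ η` on vectors (with the inner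
product law and density, which pins the structure down uniquely), tensor products of
(normal) maps, slice maps, and the associativity/commutativity/functoriality unitaries.

A locally compact quantum group is encoded via its von Neumann algebra `L^∞(𝔾)`,
the dual algebra `L^∞(𝔾̌)`, the multiplicative unitaries `V, W, V̌` (with the pentagon
equation and the implementation of the coproducts), and the map `x ↦ J̌ x* J̌`
(whose restriction to `L^∞(𝔾)` is the unitary antipode `R`).
-/

noncomputable section

namespace Paper

open Set
open scoped ComplexOrder

/-- A right pre-Hilbert `B`-module over the von Neumann algebra `B ⊆ B(Hb)`: a
`B`-module with a `B`-valued inner product, not assumed complete. -/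
structure PreHilbMod {Hb : HilbS} (Bs : Set (B Hb)) where
  X : Type
  [addX : AddCommGroup X]
  [modX : Module ℂ X]
  act : X → B Hb → X
  ip : X → X → B Hb
  act_one : ∀ x, act x 1 = x
  act_mul : ∀ x, ∀ b ∈ Bs, ∀ b' ∈ Bs, act x (b * b') = act (act x b) b'
  act_add : ∀ x y, ∀ b ∈ Bs, act (x + y) b = act x b + act y b
  act_add' : ∀ x, ∀ b ∈ Bs, ∀ b' ∈ Bs, act x (b + b') = act x b + act x b'
  act_smul : ∀ (c : ℂ) (x), ∀ b ∈ Bs, act (c • x) b = c • act x b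
  act_smul' : ∀ (c : ℂ) (x), ∀ b ∈ Bs, act x (c • b) = c • act x b
  ip_mem : ∀ x y, ip x y ∈ Bs
  ip_add_right : ∀ x y z, ip x (y + z) = ip x y + ip x z
  ip_smul_right : ∀ (c : ℂ) (x y), ip x (c • y) = c • ip x y
  ip_star : ∀ x y, star (ip x y) = ip y x
  ip_act : ∀ x y, ∀ b ∈ Bs, ip x (act y b) = ip x y * b
  ip_pos : ∀ x, (ip x x).IsPositive
  ip_defin : ∀ x, ip x x = 0 → x = 0

attribute [instance] PreHilbMod.addX PreHilbMod.modX

/-- The norm of an element of a pre-Hilbert module. -/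
def PreHilbMod.modNorm {Hb : HilbS} {Bs : Set (B Hb)} (Xm : PreHilbMod Bs)
    (x : Xm.X) : ℝ :=
  Real.sqrt ‖Xm.ip x x‖

/-- The operator norm of a map between pre-Hilbert modules. -/
def mapNorm {Hb1 Hb2 : HilbS} {B1s : Set (B Hb1)} {B2s : Set (B Hb2)}
    (X1 : PreHilbMod B1s) (X2 : PreHilbMod B2s) (f : X1.X → X2.X) : ℝ :=
  sInf {C : ℝ | 0 ≤ C ∧ ∀ x, X2.modNorm (f x) ≤ C * X1.modNorm x}

/-- Self-duality of a pre-Hilbert `B`-module: every bounded `B`-linear map into `B` is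
given by the inner product against an element. -/
def IsSelfDual {Hb : HilbS} {Bs : Set (B Hb)} (Y : PreHilbMod Bs) : Prop :=
  ∀ f : Y.X → B Hb,
    (∀ x y, f (x + y) = f x + f y) → (∀ (c : ℂ) (x), f (c • x) = c • f x) →
    (∀ x, ∀ b ∈ Bs, f (Y.act x b) = f x * b) → (∀ x, f x ∈ Bs) →
    (∃ C : ℝ, ∀ x, ‖f x‖ ≤ C * Y.modNorm x) →
    ∃ y₀, ∀ x, f x = Y.ip y₀ x

/-- Paschke's self-dual completion of a pre-Hilbert `B`-module `Xm`: a self-dual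
pre-Hilbert `B`-module containing `Xm` isometrically, compatibly with the module
structures, with `Xm` separating points. -/
structure SelfDualCompletion {Hb : HilbS} {Bs : Set (B Hb)} (Xm : PreHilbMod Bs) where
  Y : PreHilbMod Bs
  ι : Xm.X → Y.X
  ι_add : ∀ x y, ι (x + y) = ι x + ι y
  ι_smul : ∀ (c : ℂ) (x), ι (c • x) = c • ι x
  ι_act : ∀ x, ∀ b ∈ Bs, ι (Xm.act x b) = Y.act (ι x) b
  ι_ip : ∀ x y, Y.ip (ι x) (ι y) = Xm.ip x y
  selfDual : IsSelfDual Y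
  separating : ∀ y, (∀ x, Y.ip (ι x) y = 0) → y = 0

/-! `X` need not be norm dense in `X̄`, so `κ` cannot be extended by continuity; the way in is
duality. A bounded `M`-linear functional `f : X → M` satisfies `f* f ≤ C² ⟨·, ·⟩`, even on matrices
over `X`, so it factors through the Hilbert space `X ⊗_M H`, realised as the reproducing kernel
space of the Gram matrix. Through that space `f` extends to `X̄` with the same bound, its values
stay in the bicommutant `M`, and self-duality turns the extension into an element of `X̄`. Applied
to `x ↦ φ⁻¹⟨z, κ x⟩` this gives every bounded `κ` an adjoint `κ* : X̄₂ → X̄₁` with the same bound,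
and `κ̄ = κ**` is the extension. Uniqueness holds because a bounded map out of the self-dual `X̄₁`
has an adjoint, which only depends on the restriction of the map to `X₁`. -/

section OperatorMatrix

variable {E : Type*} [NormedAddCommGroup E] [InnerProductSpace ℂ E]

/-- The real quadratic form of the block of an operator matrix indexed by `s`. -/
def blockForm {I : Type*} (A : Matrix I I (E →L[ℂ] E)) (s : Finset I) (ξ : I → E) : ℝ :=
  (∑ i ∈ s, ∑ j ∈ s, ⟪A j i (ξ i), ξ j⟫).re

variable {I : Type*} {A : Matrix I I (E →L[ℂ] E)}

theorem continuous_blockForm (s : Finset I) : Continuous (blockForm A s) := by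
  unfold blockForm
  fun_prop

variable [CompleteSpace E]

/-- The cyclic subspace generated by `ζ`: the closure of `S ζ`. -/
def cyclicSubspace (S : VonNeumannAlgebra E) (ζ : E) : Submodule ℂ E :=
  (S.toSubmodule.map (ContinuousLinearMap.apply ℂ E ζ).toLinearMap).topologicalClosure

instance (S : VonNeumannAlgebra E) (ζ : E) : CompleteSpace (cyclicSubspace S ζ) :=
  (Submodule.isClosed_topologicalClosure _).completeSpace_coe

theorem self_mem_cyclicSubspace (S : VonNeumannAlgebra E) (ζ : E) : ζ ∈ cyclicSubspace S ζ :=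
  subset_closure ⟨1, one_mem S, rfl⟩

theorem apply_mem_cyclicSubspace {S : VonNeumannAlgebra E} {ζ ξ : E} {a : E →L[ℂ] E} (ha : a ∈ S)
    (hξ : ξ ∈ cyclicSubspace S ζ) : a ξ ∈ cyclicSubspace S ζ := by
  refine map_mem_closure a.continuous hξ ?_
  rintro _ ⟨b, hb, rfl⟩
  exact ⟨a * b, S.mul_mem' ha hb, rfl⟩

theorem starProjection_cyclicSubspace_mem_commutant (S : VonNeumannAlgebra E) (ζ : E) :
    (cyclicSubspace S ζ).starProjection ∈ S.commutant := by
  rw [VonNeumannAlgebra.IsStarProjection.mem_iff isStarProjection_starProjection,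
    VonNeumannAlgebra.commutant_commutant]
  intro a ha
  rw [Submodule.range_starProjection]
  exact fun ξ hξ => apply_mem_cyclicSubspace ha hξ

theorem blockForm_eq_add_of_commute {p : E →L[ℂ] E} (hp : IsStarProjection p)
    (hA : ∀ i j, Commute p (A i j)) (s : Finset I) (ξ : I → E) :
    blockForm A s ξ =
      blockForm A s (fun i => p (ξ i)) + blockForm A s (fun i => ξ i - p (ξ i)) := by
  have hpA : ∀ i j v, A i j (p v) = p (A i j v) := fun i j v =>
    DFunLike.congr_fun (hA i j).eq.symm v
  have hpp : ∀ v, p (p v) = p v := fun v => DFunLike.congr_fun hp.isIdempotentElem v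
  have hsymm : ∀ u v, ⟪p u, v⟫ = ⟪u, p v⟫ := hp.isSelfAdjoint.isSymmetric
  simp only [blockForm, ← Complex.add_re, ← Finset.sum_add_distrib]
  congr! 5 with i _ j _
  simp only [map_sub, inner_sub_left, inner_sub_right, hpA, hsymm, hpp]
  ring

theorem blockForm_nonneg_of_mem_cyclicSubspace {S : VonNeumannAlgebra E} {s : Finset I}
    (hpos : ∀ b : I → E →L[ℂ] E, (∀ i, b i ∈ S) →
      0 ≤ ∑ i ∈ s, ∑ j ∈ s, star (b i) * A i j * b j)
    {ζ : E} {ξ : I → E} (hξ : ∀ i, ξ i ∈ cyclicSubspace S ζ) : 0 ≤ blockForm A s ξ := by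
  have hmem : ξ ∈ closure (univ.pi fun _ => (fun b : E →L[ℂ] E => b ζ) '' S) := by
    rw [closure_pi_set]
    exact fun i _ => hξ i
  refine closure_minimal (fun η hη => ?_)
    (isClosed_le continuous_const (continuous_blockForm s)) hmem
  choose b hbS hb using fun i => hη i (mem_univ i)
  obtain rfl : (fun i => b i ζ) = η := funext hb
  have h := ((ContinuousLinearMap.nonneg_iff_isPositive _).1 (hpos b hbS)).re_inner_nonneg_left ζ
  rw [Finset.sum_comm] at h
  simpa [blockForm, sum_inner, ContinuousLinearMap.star_eq_adjoint,
    ContinuousLinearMap.adjoint_inner_left] using h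

theorem blockForm_nonneg {S : VonNeumannAlgebra E} (hS : ∀ i j, A i j ∈ S) {s : Finset I}
    (hpos : ∀ b : I → E →L[ℂ] E, (∀ i, b i ∈ S) →
      0 ≤ ∑ i ∈ s, ∑ j ∈ s, star (b i) * A i j * b j) (ξ : I → E) : 0 ≤ blockForm A s ξ := by
  classical
  -- Splitting off the projection onto the cyclic subspace of a nonzero `ξ i₀` kills the `i₀`-th
  -- entry of the remainder.
  induction hn : (s.filter fun i => ξ i ≠ 0).card using Nat.strong_induction_on generalizing ξ with
  | _ n ih =>
    by_cases h0 : ∀ i ∈ s, ξ i = 0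
    · have : blockForm A s ξ = 0 := by
        rw [blockForm, Finset.sum_eq_zero, Complex.zero_re]
        exact fun i hi => Finset.sum_eq_zero fun j _ => by simp [h0 i hi]
      exact this.ge
    push Not at h0
    obtain ⟨i₀, hi₀, hne⟩ := h0
    have hcomm i j := VonNeumannAlgebra.mem_commutant_iff.1
      (starProjection_cyclicSubspace_mem_commutant S (ξ i₀)) _ (hS i j)
    rw [blockForm_eq_add_of_commute isStarProjection_starProjection fun i j => (hcomm i j).symm]
    refine add_nonneg (blockForm_nonneg_of_mem_cyclicSubspace hpos
      fun i => Submodule.starProjection_apply_mem _ _) (ih _ ?_ _ rfl)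
    have hfix : (cyclicSubspace S (ξ i₀)).starProjection (ξ i₀) = ξ i₀ :=
      Submodule.starProjection_eq_self_iff.2 (self_mem_cyclicSubspace S (ξ i₀))
    rw [← hn]
    refine Finset.card_lt_card ((Finset.ssubset_iff_of_subset fun i => ?_).2
      ⟨i₀, by simp [hi₀, hne],
        by simp only [Finset.mem_filter, hfix, sub_self, ne_eq, not_true, and_false,
          not_false_eq_true]⟩)
    simp only [Finset.mem_filter]
    exact fun ⟨hi, h⟩ => ⟨hi, fun h' => h (by simp [h'])⟩

theorem posSemidef_of_mem_vonNeumannAlgebra {S : VonNeumannAlgebra E} (hA : A.IsHermitian)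
    (hS : ∀ i j, A i j ∈ S)
    (hpos : ∀ (s : Finset I) (b : I → E →L[ℂ] E), (∀ i, b i ∈ S) →
      0 ≤ ∑ i ∈ s, ∑ j ∈ s, star (b i) * A i j * b j) : A.PosSemidef := by
  refine (RKHS.posSemidef_tfae.out 0 2).2 ?_
  exact ⟨hA, fun ξ => blockForm_nonneg hS (hpos ξ.support) ξ⟩

end OperatorMatrix

section CStarOrder

variable {A : Type*} [CStarAlgebra A] [PartialOrder A] [StarOrderedRing A]

theorem star_mul_self_le_of_norm_mul_rpow_le {p t : A} (hp : IsStrictlyPositive p) {C : ℝ}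
    (h : ‖t * p ^ (-(1 / 2) : ℝ)‖ ≤ C) : star t * t ≤ C ^ 2 • p := by
  have hsa (y : ℝ) : star (p ^ y) = p ^ y := (IsSelfAdjoint.of_nonneg CFC.rpow_nonneg).star_eq
  have hinv : p ^ (-(1 / 2) : ℝ) * p ^ (1 / 2 : ℝ) = 1 := CFC.rpow_neg_mul_rpow _
  have hsq : p ^ (1 / 2 : ℝ) * p ^ (1 / 2 : ℝ) = p := by
    rw [← CFC.rpow_add hp.isUnit, add_halves, CFC.rpow_one p]
  have ht : t * p ^ (-(1 / 2) : ℝ) * p ^ (1 / 2 : ℝ) = t := by rw [mul_assoc, hinv, mul_one]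
  calc star t * t
      = star (p ^ (1 / 2 : ℝ)) * (star (t * p ^ (-(1 / 2) : ℝ)) * (t * p ^ (-(1 / 2) : ℝ))) *
          p ^ (1 / 2 : ℝ) := by
        nth_rw 1 2 [← ht]
        simp only [star_mul, mul_assoc]
    _ ≤ star (p ^ (1 / 2 : ℝ)) * algebraMap ℝ A (C ^ 2) * p ^ (1 / 2 : ℝ) := by
        refine star_left_conjugate_le_conjugate (CStarAlgebra.star_mul_le_algebraMap_norm_sq.trans
          (algebraMap_mono A (pow_le_pow_left₀ (norm_nonneg _) h 2))) _
    _ = C ^ 2 • p := by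
        rw [hsa, ← Algebra.commutes, mul_assoc, hsq, Algebra.smul_def]

theorem star_mul_self_le_smul {S : StarSubalgebra ℂ A} [IsClosed (S : Set A)] {a t : A}
    (ha : 0 ≤ a) (haS : a ∈ S) {C : ℝ} (hC : 0 ≤ C)
    (h : ∀ b ∈ S, ‖t * b‖ ≤ C * √‖star b * a * b‖) : star t * t ≤ C ^ 2 • a := by
  have hle (ε : ℝ) (hε : 0 < ε) : star t * t ≤ C ^ 2 • (a + algebraMap ℝ A ε) := by
    set p := a + algebraMap ℝ A ε
    have hp : IsStrictlyPositive p := .nonneg_add ha (isStrictlyPositive_algebraMap hε)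
    have hb : p ^ (-(1 / 2) : ℝ) ∈ S := by
      rw [CFC.rpow_eq_cfc_real]
      exact cfc_mem (𝕜' := ℂ) _ (add_mem haS (algebraMap_mem S (ε : ℂ)))
    have hle_one : star (p ^ (-(1 / 2) : ℝ)) * a * p ^ (-(1 / 2) : ℝ) ≤ 1 := calc
      _ ≤ star (p ^ (-(1 / 2) : ℝ)) * p * p ^ (-(1 / 2) : ℝ) :=
        star_left_conjugate_le_conjugate (le_add_of_nonneg_right (algebraMap_nonneg A hε.le)) _
      _ = 1 := by
        rw [(IsSelfAdjoint.of_nonneg CFC.rpow_nonneg).star_eq, CFC.conjugate_rpow_neg_one_half p]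
    refine star_mul_self_le_of_norm_mul_rpow_le hp ((h _ hb).trans (mul_le_of_le_one_right hC ?_))
    rw [Real.sqrt_le_one]
    exact (CStarAlgebra.norm_le_one_iff_of_nonneg _ (star_left_conjugate_nonneg ha _)).2 hle_one
  have hlim : Filter.Tendsto (fun ε : ℝ => C ^ 2 • (a + algebraMap ℝ A ε)) (nhdsWithin 0 (Ioi 0))
      (nhds (C ^ 2 • a)) := by
    have hcont : Continuous fun ε : ℝ => C ^ 2 • (a + algebraMap ℝ A ε) := by fun_prop
    exact tendsto_nhdsWithin_of_tendsto_nhds (hcont.tendsto' 0 _ (by rw [map_zero, add_zero]))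
  exact ge_of_tendsto hlim (eventually_nhdsWithin_of_forall hle)

end CStarOrder

section ReproducingKernel

variable {X V H E : Type*} [NormedAddCommGroup V] [InnerProductSpace ℂ V] [CompleteSpace V]
  [NormedAddCommGroup H] [InnerProductSpace ℂ H] [CompleteSpace H] [RKHS ℂ H X V]
  [NormedAddCommGroup E] [InnerProductSpace ℂ E]

theorem denseRange_lsum_kerFun :
    DenseRange (Finsupp.lsum ℂ fun x => (RKHS.kerFun H x).toLinearMap) := by
  have hspan : Submodule.span ℂ {RKHS.kerFun H x v | (x) (v)} ≤
      LinearMap.range (Finsupp.lsum ℂ fun x => (RKHS.kerFun H x).toLinearMap) := by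
    rw [Submodule.span_le]
    rintro _ ⟨x, v, rfl⟩
    exact ⟨Finsupp.single x v, by simp⟩
  exact Dense.mono hspan (Submodule.dense_iff_topologicalClosure_eq_top.2 (RKHS.kerFun_dense H))

theorem ext_comp_kerFun {S T : H →L[ℂ] E}
    (h : ∀ x, S ∘L RKHS.kerFun H x = T ∘L RKHS.kerFun H x) : S = T := by
  refine ContinuousLinearMap.ext_on
    (Submodule.dense_iff_topologicalClosure_eq_top.2 (RKHS.kerFun_dense H)) ?_
  rintro _ ⟨x, v, rfl⟩
  exact DFunLike.congr_fun (h x) v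

variable [CompleteSpace E]

theorem norm_sum_apply_sq (t : X → V →L[ℂ] E) (v : X →₀ V) :
    ‖v.sum fun x w => t x w‖ ^ 2 =
      (v.sum fun x w => v.sum fun x' w' => ⟪((t x').adjoint ∘L t x) w, w'⟫).re := by
  rw [← inner_self_eq_norm_sq (𝕜 := ℂ)]
  simp only [Finsupp.sum, sum_inner, inner_sum, ContinuousLinearMap.comp_apply,
    ContinuousLinearMap.adjoint_inner_left, RCLike.re_to_complex]
  rw [Finset.sum_comm]

theorem exists_comp_kerFun_eq {t : X → V →L[ℂ] E} {C : ℝ} (hC : 0 ≤ C)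
    (h : (C ^ 2 • RKHS.kernel H - Matrix.of fun x y => (t x).adjoint ∘L t y).PosSemidef) :
    ∃ T : H →L[ℂ] E, ‖T‖ ≤ C ∧ ∀ x, T ∘L RKHS.kerFun H x = t x := by
  let e := Finsupp.lsum ℂ fun x => (RKHS.kerFun H x).toLinearMap
  let f := Finsupp.lsum ℂ fun x => (t x).toLinearMap
  have hnorm v : ‖f v‖ ≤ C * ‖e v‖ := by
    have hpos := (RKHS.posSemidef_tfae.out 0 2 (a := _) (b := _ ∧ _)).1 h
    have hsum : 0 ≤ C ^ 2 * ‖v.sum fun x w => RKHS.kerFun H x w‖ ^ 2 -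
        ‖v.sum fun x w => t x w‖ ^ 2 := by
      convert hpos.2 v using 1
      rw [norm_sum_apply_sq, norm_sum_apply_sq]
      simp only [Finsupp.sum, Matrix.sub_apply, Matrix.smul_apply, Matrix.of_apply,
        RKHS.kernel_apply, sub_apply, smul_apply, inner_sub_left,
        RCLike.real_smul_eq_coe_smul (K := ℂ), inner_smul_real_left, Finset.sum_sub_distrib,
        ← Finset.mul_sum, smul_eq_mul, Complex.sub_re, RCLike.re_to_complex]
      exact congrArg (· - _) (Complex.re_ofReal_mul _ _).symm
    rw [← mul_pow, sub_nonneg] at hsum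
    exact le_of_sq_le_sq hsum (by positivity)
  refine ⟨f.extendOfNorm e, LinearMap.opNorm_extendOfNorm_le denseRange_lsum_kerFun hC hnorm,
    fun x => ContinuousLinearMap.ext fun v => ?_⟩
  simpa [e, f] using
    LinearMap.extendOfNorm_eq denseRange_lsum_kerFun ⟨C, hnorm⟩ (Finsupp.single x v)

theorem adjoint_apply_of_comp_kerFun_eq {T : H →L[ℂ] E} {x : X} {t : V →L[ℂ] E}
    (h : T ∘L RKHS.kerFun H x = t) (e : E) : T.adjoint e x = t.adjoint e := by
  rw [← h, ContinuousLinearMap.adjoint_comp, ContinuousLinearMap.comp_apply, RKHS.adjoint_kerFun]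

theorem exists_norm_le_one_and_apply_eq_of_kernel_comp_eq {X' H' : Type*} [NormedAddCommGroup H']
    [InnerProductSpace ℂ H'] [CompleteSpace H'] [RKHS ℂ H' X' V] (i : X → X')
    (h : ∀ x y, RKHS.kernel H' (i x) (i y) = RKHS.kernel H x y) :
    ∃ R : H' →L[ℂ] H, ‖R‖ ≤ 1 ∧ ∀ k x, R k x = k (i x) := by
  have hker : (1 : ℝ) ^ 2 • RKHS.kernel H - Matrix.of (fun x y =>
      (RKHS.kerFun H' (i x)).adjoint ∘L RKHS.kerFun H' (i y)) = 0 := by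
    ext1 x y
    simp only [one_pow, one_smul, Matrix.sub_apply, Matrix.of_apply, ← RKHS.kernel_apply, h,
      sub_self, Matrix.zero_apply]
  obtain ⟨T, hT, hTx⟩ := exists_comp_kerFun_eq zero_le_one (hker ▸ Matrix.PosSemidef.zero)
  refine ⟨T.adjoint, by simpa using hT, fun k x => ?_⟩
  rw [adjoint_apply_of_comp_kerFun_eq (hTx x), RKHS.adjoint_kerFun]

theorem exists_apply_eq_of_commute_kernel {u : V →L[ℂ] V} (hu : u ∈ unitary (V →L[ℂ] V))
    (h : ∀ x y, Commute u (RKHS.kernel H x y)) : ∃ W : H →L[ℂ] H, ∀ k x, W k x = u (k x) := by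
  have hker : (1 : ℝ) ^ 2 • RKHS.kernel H - Matrix.of (fun x y =>
      (RKHS.kerFun H x ∘L star u).adjoint ∘L RKHS.kerFun H y ∘L star u) = 0 := by
    ext1 x y
    have hconj : u * RKHS.kernel H x y * star u = RKHS.kernel H x y := by
      rw [(h x y).eq, mul_assoc, Unitary.mul_star_self_of_mem hu, mul_one]
    rw [Matrix.sub_apply, Matrix.zero_apply, one_pow, one_smul, sub_eq_zero, ← hconj,
      RKHS.kernel_apply, Matrix.of_apply, ContinuousLinearMap.adjoint_comp,
      ← ContinuousLinearMap.star_eq_adjoint (star u), star_star]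
    rfl
  obtain ⟨T, -, hTx⟩ := exists_comp_kerFun_eq zero_le_one (hker ▸ Matrix.PosSemidef.zero)
  refine ⟨T.adjoint, fun k x => ?_⟩
  rw [adjoint_apply_of_comp_kerFun_eq (hTx x), ContinuousLinearMap.adjoint_comp,
    ContinuousLinearMap.comp_apply, RKHS.adjoint_kerFun, ← ContinuousLinearMap.star_eq_adjoint,
    star_star]

end ReproducingKernel

section VonNeumann

theorem mem_vonNeumannAlgebra_of_commute_unitary {E : Type*} [NormedAddCommGroup E]
    [InnerProductSpace ℂ E] [CompleteSpace E] {S : VonNeumannAlgebra E} {x : E →L[ℂ] E}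
    (hx : ∀ u ∈ S.commutant, u ∈ unitary (E →L[ℂ] E) → Commute u x) : x ∈ S := by
  have hclosed : IsClosed (S.commutant.toStarSubalgebra : Set (E →L[ℂ] E)) :=
    S.coe_commutant ▸ Set.isClosed_centralizer (S : Set (E →L[ℂ] E))
  rw [← S.commutant_commutant, VonNeumannAlgebra.mem_commutant_iff]
  intro a ha
  obtain ⟨u, c, hsum, -⟩ := CStarAlgebra.exists_sum_four_unitary
    (A := S.commutant.toStarSubalgebra) ⟨a, ha⟩
  obtain rfl : a = ∑ i, c i • (u i : E →L[ℂ] E) := by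
    simpa using congrArg Subtype.val hsum
  refine Commute.sum_left _ _ _ fun i _ => (hx _ (u i).1.2 ?_).smul_left (c i)
  exact Unitary.map_mem S.commutant.toStarSubalgebra.subtype (u i).2

variable {K : HilbS} {M : Set (B K)}

/-- A von Neumann algebra in the sense of `IsVNA`, as a `VonNeumannAlgebra`. -/
def IsVNA.toVonNeumannAlgebra (hM : IsVNA M) : VonNeumannAlgebra K.carrier where
  toStarSubalgebra :=
    { (Subalgebra.centralizer ℂ (commutant M)).copy M hM.2.symm with
      star_mem' := hM.1 _ }
  centralizer_centralizer' := hM.2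

namespace IsVNA

theorem isClosed (hM : IsVNA M) : IsClosed M := hM.2 ▸ Set.isClosed_centralizer _

theorem add_mem (hM : IsVNA M) {a b : B K} (ha : a ∈ M) (hb : b ∈ M) : a + b ∈ M :=
  hM.toVonNeumannAlgebra.add_mem' ha hb

theorem mul_mem (hM : IsVNA M) {a b : B K} (ha : a ∈ M) (hb : b ∈ M) : a * b ∈ M :=
  hM.toVonNeumannAlgebra.mul_mem' ha hb

theorem one_mem (hM : IsVNA M) : 1 ∈ M := hM.toVonNeumannAlgebra.one_mem'

theorem smul_mem (hM : IsVNA M) (c : ℂ) {a : B K} (ha : a ∈ M) : c • a ∈ M :=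
  hM.toVonNeumannAlgebra.toSubalgebra.smul_mem ha c

end IsVNA

end VonNeumann

namespace PreHilbMod

variable {Hb : HilbS} {M : Set (B Hb)} (X : PreHilbMod M)

theorem ip_add_left (x y z : X.X) : X.ip (x + y) z = X.ip x z + X.ip y z := by
  rw [← X.ip_star, X.ip_add_right, star_add, X.ip_star, X.ip_star]

theorem ip_act_left (x y : X.X) {b : B Hb} (hb : b ∈ M) :
    X.ip (X.act x b) y = star b * X.ip x y := by
  rw [← X.ip_star, X.ip_act _ _ _ hb, star_mul, X.ip_star]

theorem ip_sum_right {I : Type*} (x : X.X) (y : I → X.X) (s : Finset I) :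
    X.ip x (∑ i ∈ s, y i) = ∑ i ∈ s, X.ip x (y i) :=
  map_sum (AddMonoidHom.mk' (X.ip x) (X.ip_add_right x)) y s

theorem ip_sum_left {I : Type*} (x : I → X.X) (y : X.X) (s : Finset I) :
    X.ip (∑ i ∈ s, x i) y = ∑ i ∈ s, X.ip (x i) y :=
  map_sum (AddMonoidHom.mk' (X.ip · y) fun x x' => X.ip_add_left x x' y) x s

theorem ip_sub_right (x y z : X.X) : X.ip x (y - z) = X.ip x y - X.ip x z :=
  map_sub (AddMonoidHom.mk' (X.ip x) (X.ip_add_right x)) y z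

theorem ip_ext_left {x y : X.X} (h : ∀ z, X.ip z x = X.ip z y) : x = y :=
  sub_eq_zero.1 <| X.ip_defin _ <| by rw [X.ip_sub_right, h, sub_self]

theorem ip_ext_right {x y : X.X} (h : ∀ z, X.ip x z = X.ip y z) : x = y :=
  X.ip_ext_left fun z => by rw [← X.ip_star, h, X.ip_star]

theorem ip_self_nonneg (x : X.X) : 0 ≤ X.ip x x :=
  (ContinuousLinearMap.nonneg_iff_isPositive _).2 (X.ip_pos x)

theorem ip_sum_act_self (s : Finset X.X) {b : X.X → B Hb} (hb : ∀ x, b x ∈ M) :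
    X.ip (∑ x ∈ s, X.act x (b x)) (∑ x ∈ s, X.act x (b x)) =
      ∑ x ∈ s, ∑ y ∈ s, star (b x) * X.ip x y * b y := by
  simp only [X.ip_sum_left, X.ip_sum_right, X.ip_act _ _ _ (hb _), X.ip_act_left _ _ (hb _)]

theorem modNorm_nonneg (x : X.X) : 0 ≤ X.modNorm x := Real.sqrt_nonneg _

theorem modNorm_sq (x : X.X) : X.modNorm x ^ 2 = ‖X.ip x x‖ := Real.sq_sqrt (norm_nonneg _)

/-- The Gram matrix of a pre-Hilbert module: the operator-valued kernel whose reproducing kernel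
Hilbert space plays the role of the interior tensor product with the underlying Hilbert space. -/
def gram : Matrix X.X X.X (B Hb) := Matrix.of X.ip

@[simp] theorem gram_apply (x y : X.X) : X.gram x y = X.ip x y := rfl

theorem isHermitian_gram : X.gram.IsHermitian :=
  Matrix.ext fun x y => X.ip_star y x

theorem posSemidef_gram (hM : IsVNA M) : X.gram.PosSemidef :=
  posSemidef_of_mem_vonNeumannAlgebra (S := hM.toVonNeumannAlgebra) X.isHermitian_gram X.ip_mem
    fun s _ hb => (X.ip_self_nonneg _).trans_eq (X.ip_sum_act_self s hb)

section ReproducingKernel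

variable {X} {K : Type*} [NormedAddCommGroup K] [InnerProductSpace ℂ K] [CompleteSpace K]
  [RKHS ℂ K X.X Hb.carrier] (hK : RKHS.kernel K = X.gram)

include hK

theorem kerFun_add (x y : X.X) :
    RKHS.kerFun K (x + y) = RKHS.kerFun K x + RKHS.kerFun K y := by
  ext v z
  simp [RKHS.kerFun_apply, hK, X.ip_add_right]

theorem kerFun_act (x : X.X) {b : B Hb} (hb : b ∈ M) :
    RKHS.kerFun K (X.act x b) = RKHS.kerFun K x ∘L b := by
  ext v z
  simp [RKHS.kerFun_apply, hK, X.ip_act _ _ _ hb]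

theorem norm_kerFun (x : X.X) : ‖RKHS.kerFun K x‖ = X.modNorm x := by
  rw [RKHS.norm_kerFun_eq_sqrt_norm_kernel, hK, modNorm, gram_apply]

end ReproducingKernel

theorem norm_ip_le (hM : IsVNA M) (x y : X.X) : ‖X.ip x y‖ ≤ X.modNorm x * X.modNorm y := by
  have : Fact X.gram.PosSemidef := ⟨X.posSemidef_gram hM⟩
  simpa only [RKHS.OfKernel.kernel_ofKernel] using! RKHS.norm_kernel_le (RKHS.OfKernel X.gram) x y

end PreHilbMod

/-- An `M`-linear map `f : X → M` on a pre-Hilbert `M`-module, bounded with constant `C`. -/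
structure IsFunctionalWith {Hb : HilbS} {M : Set (B Hb)} (X : PreHilbMod M) (C : ℝ)
    (f : X.X → B Hb) : Prop where
  nonneg : 0 ≤ C
  map_add : ∀ x y, f (x + y) = f x + f y
  map_act : ∀ x, ∀ b ∈ M, f (X.act x b) = f x * b
  mem : ∀ x, f x ∈ M
  norm_le : ∀ x, ‖f x‖ ≤ C * X.modNorm x

namespace IsFunctionalWith

variable {Hb : HilbS} {M : Set (B Hb)} {X : PreHilbMod M} {C : ℝ} {f : X.X → B Hb}

theorem map_smul (hM : IsVNA M) (hf : IsFunctionalWith X C f) (c : ℂ) (x : X.X) :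
    f (c • x) = c • f x := by
  have h := hf.map_act x (c • 1) (hM.smul_mem c hM.one_mem)
  rwa [X.act_smul' _ _ _ hM.one_mem, X.act_one, mul_smul_one] at h

theorem map_sum_act (hf : IsFunctionalWith X C f) (s : Finset X.X) {b : X.X → B Hb}
    (hb : ∀ x, b x ∈ M) : f (∑ x ∈ s, X.act x (b x)) = ∑ x ∈ s, f x * b x := by
  rw [← Finset.sum_congr rfl fun x _ => hf.map_act x _ (hb x)]
  exact map_sum (AddMonoidHom.mk' f hf.map_add) _ s

theorem star_mul_self_le (hM : IsVNA M) (hf : IsFunctionalWith X C f) (x : X.X) :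
    star (f x) * f x ≤ C ^ 2 • X.ip x x := by
  have : IsClosed (hM.toVonNeumannAlgebra.toStarSubalgebra : Set (B Hb)) := hM.isClosed
  refine star_mul_self_le_smul (S := hM.toVonNeumannAlgebra.toStarSubalgebra)
    (X.ip_self_nonneg x) (X.ip_mem x x) hf.nonneg fun b hb => ?_
  rw [← hf.map_act x b hb, mul_assoc, ← X.ip_act _ _ _ hb, ← X.ip_act_left _ _ hb]
  exact hf.norm_le _

theorem posSemidef_sub (hM : IsVNA M) (hf : IsFunctionalWith X C f) :
    (C ^ 2 • X.gram - Matrix.of fun x y => star (f x) * f y).PosSemidef := by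
  refine posSemidef_of_mem_vonNeumannAlgebra (S := hM.toVonNeumannAlgebra)
    ((X.isHermitian_gram.smul (IsSelfAdjoint.all (C ^ 2))).sub
      (Matrix.ext fun x y => (star_mul _ _).trans (by rw [star_star]; rfl))) (fun x y => ?_) ?_
  · refine sub_mem (S := VonNeumannAlgebra Hb.carrier) ?_
      (hM.mul_mem (hM.1 _ (hf.mem x)) (hf.mem y))
    exact hM.smul_mem (C ^ 2 : ℝ) (X.ip_mem x y)
  · intro s b hb
    have h := sub_nonneg.2 (hf.star_mul_self_le hM (∑ x ∈ s, X.act x (b x)))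
    rw [X.ip_sum_act_self s hb, hf.map_sum_act s hb] at h
    convert h using 1
    simp only [Matrix.sub_apply, Matrix.smul_apply, Matrix.of_apply, PreHilbMod.gram_apply,
      star_sum, star_mul, Finset.sum_mul_sum, Finset.smul_sum, ← Finset.sum_sub_distrib, mul_sub, sub_mul,
      mul_assoc, mul_smul_comm, smul_mul_assoc]

theorem of_comp_kerFun (hM : IsVNA M) {K : Type*} [NormedAddCommGroup K] [InnerProductSpace ℂ K]
    [CompleteSpace K] [RKHS ℂ K X.X Hb.carrier] (hK : RKHS.kernel K = X.gram)
    {T : K →L[ℂ] Hb.carrier} (hT : ‖T‖ ≤ C)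
    (hcomm : ∀ u ∈ commutant M, u ∈ unitary (B Hb) → ∀ x, Commute u (T ∘L RKHS.kerFun K x)) :
    IsFunctionalWith X C fun x => T ∘L RKHS.kerFun K x where
  nonneg := (norm_nonneg T).trans hT
  map_add x y := by rw [PreHilbMod.kerFun_add hK, ContinuousLinearMap.comp_add]
  map_act x b hb := by
    rw [PreHilbMod.kerFun_act hK x hb]
    rfl
  mem x := mem_vonNeumannAlgebra_of_commute_unitary (S := hM.toVonNeumannAlgebra)
    fun u hu hu' => hcomm u (VonNeumannAlgebra.mem_commutant_iff.1 hu) hu' x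
  norm_le x := by
    rw [← PreHilbMod.norm_kerFun hK x]
    exact (T.opNorm_comp_le _).trans (mul_le_mul_of_nonneg_right hT (norm_nonneg _))

end IsFunctionalWith

namespace SelfDualCompletion

variable {Hb : HilbS} {M : Set (B Hb)} {X : PreHilbMod M} (c : SelfDualCompletion X) {C : ℝ}
  {f : X.X → B Hb}

section ReproducingKernel

variable {c} {K L : Type*} [NormedAddCommGroup K] [InnerProductSpace ℂ K] [CompleteSpace K]
  [RKHS ℂ K X.X Hb.carrier] (hK : RKHS.kernel K = X.gram)
  [NormedAddCommGroup L] [InnerProductSpace ℂ L] [CompleteSpace L]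
  [RKHS ℂ L c.Y.X Hb.carrier] (hL : RKHS.kernel L = c.Y.gram)

include hK hL

theorem comp_kerFun_ι {R : L →L[ℂ] K} (hR : ∀ k x, R k x = k (c.ι x)) (x : X.X) :
    R ∘L RKHS.kerFun L (c.ι x) = RKHS.kerFun K x := by
  ext v z
  simp [hR, RKHS.kerFun_apply, hK, hL, c.ι_ip]

theorem commute_comp_kerFun {R : L →L[ℂ] K} (hR : ∀ k x, R k x = k (c.ι x))
    {T : K →L[ℂ] Hb.carrier} {u : B Hb} (hu : u ∈ commutant M) (hu' : u ∈ unitary (B Hb))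
    (hT : ∀ x, Commute u (T ∘L RKHS.kerFun K x)) (y : c.Y.X) :
    Commute u ((T ∘L R) ∘L RKHS.kerFun L y) := by
  have hcomm {b : B Hb} (hb : b ∈ M) (v : Hb.carrier) : u (b v) = b (u v) :=
    DFunLike.congr_fun (hu b hb).symm v
  obtain ⟨W, hW⟩ := exists_apply_eq_of_commute_kernel (H := K) hu' fun x y => by
    rw [hK]
    exact (hu _ (X.ip_mem x y)).symm
  have hTW : T ∘L W = u ∘L T := ext_comp_kerFun fun x => by
    have hWx : W ∘L RKHS.kerFun K x = RKHS.kerFun K x ∘L u := by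
      ext v z
      simpa [hW, RKHS.kerFun_apply, hK] using hcomm (X.ip_mem z x) v
    rw [ContinuousLinearMap.comp_assoc, hWx]
    exact (hT x).eq.symm
  have hRW : W ∘L R ∘L RKHS.kerFun L y = R ∘L RKHS.kerFun L y ∘L u := by
    ext v z
    simpa [hW, hR, RKHS.kerFun_apply, hL] using hcomm (c.Y.ip_mem (c.ι z) y) v
  calc u ∘L (T ∘L R) ∘L RKHS.kerFun L y = (u ∘L T) ∘L R ∘L RKHS.kerFun L y := rfl
    _ = T ∘L W ∘L R ∘L RKHS.kerFun L y := by rw [← hTW]; rfl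
    _ = ((T ∘L R) ∘L RKHS.kerFun L y) ∘L u := by rw [hRW]; rfl

end ReproducingKernel

theorem exists_isFunctionalWith_extend (hM : IsVNA M) (hf : IsFunctionalWith X C f) :
    ∃ g, IsFunctionalWith c.Y C g ∧ ∀ x, g (c.ι x) = f x := by
  have : Fact X.gram.PosSemidef := ⟨X.posSemidef_gram hM⟩
  have : Fact c.Y.gram.PosSemidef := ⟨c.Y.posSemidef_gram hM⟩
  have hK : RKHS.kernel (RKHS.OfKernel X.gram) = X.gram := RKHS.OfKernel.kernel_ofKernel
  have hL : RKHS.kernel (RKHS.OfKernel c.Y.gram) = c.Y.gram := RKHS.OfKernel.kernel_ofKernel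
  obtain ⟨T, hT, hTf⟩ := exists_comp_kerFun_eq (H := RKHS.OfKernel X.gram) (t := f) hf.nonneg
    (by rw [hK]; exact hf.posSemidef_sub hM)
  obtain ⟨R, hR, hRι⟩ := exists_norm_le_one_and_apply_eq_of_kernel_comp_eq
    (H := RKHS.OfKernel X.gram) (H' := RKHS.OfKernel c.Y.gram) c.ι
    fun x y => by rw [hK, hL]; exact c.ι_ip x y
  have hTR : ‖T ∘L R‖ ≤ C := (T.opNorm_comp_le R).trans
    ((mul_le_mul hT hR (norm_nonneg _) hf.nonneg).trans_eq (mul_one C))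
  refine ⟨_, .of_comp_kerFun hM hL hTR fun u hu hu' => commute_comp_kerFun hK hL hRι hu hu'
    fun x => ?_, fun x => ?_⟩
  · rw [hTf]
    exact (hu _ (hf.mem x)).symm
  · rw [ContinuousLinearMap.comp_assoc, comp_kerFun_ι hK hL hRι, hTf]

theorem exists_ip_eq (hM : IsVNA M) (hf : IsFunctionalWith X C f) :
    ∃ y, (∀ x, c.Y.ip y (c.ι x) = f x) ∧ c.Y.modNorm y ≤ C := by
  obtain ⟨g, hg, hgf⟩ := c.exists_isFunctionalWith_extend hM hf
  obtain ⟨y, hy⟩ := c.selfDual g hg.map_add (hg.map_smul hM) hg.map_act hg.mem ⟨C, hg.norm_le⟩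
  refine ⟨y, fun x => by rw [← hy, hgf], ?_⟩
  have hsq : c.Y.modNorm y * c.Y.modNorm y ≤ C * c.Y.modNorm y := by
    rw [← sq, c.Y.modNorm_sq, ← hy]
    exact hg.norm_le y
  obtain h | h := (c.Y.modNorm_nonneg y).eq_or_lt
  · exact h ▸ hg.nonneg
  · exact le_of_mul_le_mul_right hsq h

end SelfDualCompletion

namespace IsStarHomOn

variable {H K : HilbS} {M : Set (B H)} {φ : B H → B K}

theorem norm_map (hM : IsVNA M) (hφ : IsStarHomOn M 1 1 φ) (hinj : InjOn φ M) {a : B H}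
    (ha : a ∈ M) : ‖φ a‖ = ‖a‖ := by
  have : IsClosed (hM.toVonNeumannAlgebra.toStarSubalgebra : Set (B H)) := hM.isClosed
  let Φ : hM.toVonNeumannAlgebra.toStarSubalgebra →⋆ₙₐ[ℂ] B K :=
    { toFun a := φ a
      map_smul' c a := hφ.map_smul c a a.2
      map_zero' := by simpa using hφ.map_smul 0 1 hM.one_mem
      map_add' a b := hφ.map_add a a.2 b b.2
      map_mul' a b := hφ.map_mul a a.2 b b.2
      map_star' a := hφ.map_star a a.2 }
  have hΦ : Function.Injective Φ := fun a b h => Subtype.ext (hinj a.2 b.2 h)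
  exact NonUnitalStarAlgHom.norm_map Φ hΦ ⟨a, by exact ha⟩

end IsStarHomOn

/-- `φ` restricts to a *-isomorphism `M ≃ N` with inverse `ψ`; the values of `φ` off `M` and of `ψ`
off `N` are irrelevant. -/
structure IsStarIsoOn {H K : HilbS} (M : Set (B H)) (N : Set (B K)) (φ : B H → B K)
    (ψ : B K → B H) : Prop where
  hom : IsStarHomOn M 1 1 φ
  hom_symm : IsStarHomOn N 1 1 ψ
  mapsTo : MapsTo φ M N
  mapsTo_symm : MapsTo ψ N M
  left_inv : LeftInvOn ψ φ M
  right_inv : LeftInvOn φ ψ N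

namespace IsStarIsoOn

variable {H K : HilbS} {M : Set (B H)} {N : Set (B K)} {φ : B H → B K} {ψ : B K → B H}

theorem symm (I : IsStarIsoOn M N φ ψ) : IsStarIsoOn N M ψ φ :=
  ⟨I.hom_symm, I.hom, I.mapsTo_symm, I.mapsTo, I.right_inv, I.left_inv⟩

theorem norm_map (hM : IsVNA M) (I : IsStarIsoOn M N φ ψ) {a : B H} (ha : a ∈ M) :
    ‖φ a‖ = ‖a‖ :=
  I.hom.norm_map hM I.left_inv.injOn ha

end IsStarIsoOn

theorem IsStarHomOn.isStarIsoOn_image {H K : HilbS} {M : Set (B H)} {φ : B H → B K} {ψ : B K → B H}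
    (hM : IsVNA M) (hφ : IsStarHomOn M 1 1 φ) (hψ : LeftInvOn ψ φ M) :
    IsStarIsoOn M (φ '' M) φ ψ where
  hom := hφ
  hom_symm :=
    { map_add := by
        rintro _ ⟨a, ha, rfl⟩ _ ⟨b, hb, rfl⟩
        rw [← hφ.map_add a ha b hb, hψ (hM.add_mem ha hb), hψ ha, hψ hb]
      map_smul := by
        rintro c _ ⟨a, ha, rfl⟩
        rw [← hφ.map_smul c a ha, hψ (hM.smul_mem c ha), hψ ha]
      map_mul := by
        rintro _ ⟨a, ha, rfl⟩ _ ⟨b, hb, rfl⟩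
        rw [← hφ.map_mul a ha b hb, hψ (hM.mul_mem ha hb), hψ ha, hψ hb]
      map_star := by
        rintro _ ⟨a, ha, rfl⟩
        rw [← hφ.map_star a ha, hψ (hM.1 a ha), hψ ha]
      map_unit := by rw [← hφ.map_unit, hψ hM.one_mem] }
  mapsTo := mapsTo_image φ M
  mapsTo_symm := by
    rintro _ ⟨a, ha, rfl⟩
    rwa [hψ ha]
  left_inv := hψ
  right_inv := by
    rintro _ ⟨a, ha, rfl⟩
    rw [hψ ha]

theorem IsStarIsoOn.refl {H : HilbS} (M : Set (B H)) : IsStarIsoOn M M id id :=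
  have hid : IsStarHomOn M 1 1 id :=
    ⟨fun _ _ _ _ => rfl, fun _ _ _ => rfl, fun _ _ _ _ => rfl, fun _ _ => rfl, rfl⟩
  ⟨hid, hid, mapsTo_id M, mapsTo_id M, fun _ _ => rfl, fun _ _ => rfl⟩

/-- An additive map `k : X → Y` between pre-Hilbert modules over `M` and `N` that is linear along
`φ : M → N` and bounded with constant `C`. -/
structure IsModHomWith {H K : HilbS} {M : Set (B H)} {N : Set (B K)} (φ : B H → B K)
    (X : PreHilbMod M) (Y : PreHilbMod N) (C : ℝ) (k : X.X → Y.X) : Prop where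
  nonneg : 0 ≤ C
  map_add : ∀ x y, k (x + y) = k x + k y
  map_act : ∀ x, ∀ b ∈ M, k (X.act x b) = Y.act (k x) (φ b)
  modNorm_le : ∀ x, Y.modNorm (k x) ≤ C * X.modNorm x

namespace IsModHomWith

section

variable {H K : HilbS} {M : Set (B H)} {N : Set (B K)} {φ : B H → B K} {ψ : B K → B H}
  {X : PreHilbMod M} {Y : PreHilbMod N} {C D : ℝ} {k : X.X → Y.X}

theorem map_smul (hM : IsVNA M) (hN : IsVNA N) (hφ : IsStarHomOn M 1 1 φ)
    (hk : IsModHomWith φ X Y C k) (c : ℂ) (x : X.X) : k (c • x) = c • k x := by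
  have h := hk.map_act x (c • 1) (hM.smul_mem c hM.one_mem)
  rwa [X.act_smul' _ _ _ hM.one_mem, X.act_one, hφ.map_smul c 1 hM.one_mem, hφ.map_unit,
    Y.act_smul' _ _ _ hN.one_mem, Y.act_one] at h

theorem isFunctionalWith_ip (hN : IsVNA N) (I : IsStarIsoOn M N φ ψ)
    (hk : IsModHomWith φ X Y C k) (z : Y.X) :
    IsFunctionalWith X (C * Y.modNorm z) fun x => ψ (Y.ip z (k x)) where
  nonneg := mul_nonneg hk.nonneg (Y.modNorm_nonneg z)
  map_add x y := by
    rw [hk.map_add, Y.ip_add_right, I.hom_symm.map_add _ (Y.ip_mem _ _) _ (Y.ip_mem _ _)]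
  map_act x b hb := by
    rw [hk.map_act x b hb, Y.ip_act _ _ _ (I.mapsTo hb),
      I.hom_symm.map_mul _ (Y.ip_mem _ _) _ (I.mapsTo hb), I.left_inv hb]
  mem x := I.mapsTo_symm (Y.ip_mem _ _)
  norm_le x := by
    calc ‖ψ (Y.ip z (k x))‖ = ‖Y.ip z (k x)‖ := I.symm.norm_map hN (Y.ip_mem _ _)
      _ ≤ Y.modNorm z * Y.modNorm (k x) := Y.norm_ip_le hN _ _
      _ ≤ Y.modNorm z * (C * X.modNorm x) :=
        mul_le_mul_of_nonneg_left (hk.modNorm_le x) (Y.modNorm_nonneg z)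
      _ = C * Y.modNorm z * X.modNorm x := by ring

theorem exists_of_bounded (map_add : ∀ x y, k (x + y) = k x + k y)
    (map_act : ∀ x, ∀ b ∈ M, k (X.act x b) = Y.act (k x) (φ b))
    (bounded : ∃ C, ∀ x, Y.modNorm (k x) ≤ C * X.modNorm x) : ∃ C, IsModHomWith φ X Y C k :=
  bounded.imp' abs fun C hC => ⟨abs_nonneg C, map_add, map_act, fun x =>
    (hC x).trans (mul_le_mul_of_nonneg_right (le_abs_self C) (X.modNorm_nonneg x))⟩

protected theorem id : IsModHomWith id X X 1 id where
  nonneg := zero_le_one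
  map_add _ _ := rfl
  map_act _ _ _ := rfl
  modNorm_le _ := (one_mul _).ge

protected theorem comp {L : HilbS} {P : Set (B L)} {θ : B K → B L} {Z : PreHilbMod P}
    {l : Y.X → Z.X} (hl : IsModHomWith θ Y Z D l) (hφ : MapsTo φ M N) (hk : IsModHomWith φ X Y C k) :
    IsModHomWith (θ ∘ φ) X Z (D * C) (l ∘ k) where
  nonneg := mul_nonneg hl.nonneg hk.nonneg
  map_add x y := by simp only [Function.comp_apply, hk.map_add, hl.map_add]
  map_act x b hb := by
    simp only [Function.comp_apply, hk.map_act x b hb, hl.map_act _ _ (hφ hb)]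
  modNorm_le x := by
    rw [mul_assoc]
    exact (hl.modNorm_le _).trans (mul_le_mul_of_nonneg_left (hk.modNorm_le x) hl.nonneg)

theorem congr_left {φ' : B H → B K} (hk : IsModHomWith φ X Y C k) (h : EqOn φ' φ M) :
    IsModHomWith φ' X Y C k :=
  { hk with map_act := fun x b hb => by rw [hk.map_act x b hb, h hb] }

theorem injective_of_modNorm_eq (hk : IsModHomWith φ X Y C k)
    (hiso : ∀ x, Y.modNorm (k x) = X.modNorm x) : Function.Injective k := by
  refine (injective_iff_map_eq_zero (AddMonoidHom.mk' k hk.map_add)).2 fun x hx => X.ip_defin x ?_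
  have hzero : k x = k 0 := hx.trans (map_zero (AddMonoidHom.mk' k hk.map_add)).symm
  rw [← norm_eq_zero, ← X.modNorm_sq, ← hiso, hzero, hiso, X.modNorm_sq, norm_eq_zero]
  simpa using X.ip_smul_right 0 0 0

theorem exists_inverse (I : IsStarIsoOn M N φ ψ) (hk : IsModHomWith φ X Y C k)
    (hiso : ∀ x, Y.modNorm (k x) = X.modNorm x) (hsurj : Function.Surjective k) :
    ∃ l, Function.LeftInverse l k ∧ Function.RightInverse l k ∧ IsModHomWith ψ Y X 1 l := by
  obtain ⟨l, hkl⟩ := hsurj.hasRightInverse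
  have hinj := hk.injective_of_modNorm_eq hiso
  refine ⟨l, hkl.leftInverse_of_injective hinj, hkl, zero_le_one, fun y z => hinj ?_,
    fun y b hb => hinj ?_, fun y => ?_⟩
  · rw [hk.map_add, hkl, hkl, hkl]
  · rw [hk.map_act _ _ (I.mapsTo_symm hb), hkl, hkl, I.right_inv hb]
  · rw [one_mul, ← hiso, hkl]

theorem modNorm_eq_of_leftInverse (hk : IsModHomWith φ X Y 1 k) {l : Y.X → X.X}
    (hl : IsModHomWith ψ Y X 1 l) (h : Function.LeftInverse l k) (x : X.X) :
    Y.modNorm (k x) = X.modNorm x :=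
  ((hk.modNorm_le x).trans_eq (one_mul _)).antisymm <| by
    simpa only [h x, one_mul] using hl.modNorm_le (k x)

end

end IsModHomWith

namespace SelfDualCompletion

section

variable {Hb : HilbS} {M : Set (B Hb)} {X : PreHilbMod M} (c : SelfDualCompletion X)

theorem modNorm_ι (x : X.X) : c.Y.modNorm (c.ι x) = X.modNorm x := by
  rw [PreHilbMod.modNorm, c.ι_ip, PreHilbMod.modNorm]

theorem isModHomWith_ι : IsModHomWith id X c.Y 1 c.ι where
  nonneg := zero_le_one
  map_add := c.ι_add
  map_act := c.ι_act
  modNorm_le x := by rw [c.modNorm_ι, one_mul]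

variable {c} in
theorem ext {y z : c.Y.X} (h : ∀ x, c.Y.ip y (c.ι x) = c.Y.ip z (c.ι x)) : y = z :=
  sub_eq_zero.1 <| c.separating _ fun x => by
    rw [c.Y.ip_sub_right, ← c.Y.ip_star y, ← c.Y.ip_star z, h, sub_self]

end

variable {H K : HilbS} {M : Set (B H)} {N : Set (B K)} {φ : B H → B K} {ψ : B K → B H}
  {X : PreHilbMod M} {Z : PreHilbMod N} {C : ℝ} {κ : X.X → Z.X} {c : SelfDualCompletion X}
  {a : Z.X → c.Y.X}

/-- `a : Z → X̄` is the adjoint of `κ : X → Z`, for modules over `M` and `N` identified along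
`ψ : N → M`. -/
def IsAdjoint (c : SelfDualCompletion X) (ψ : B K → B H) (κ : X.X → Z.X) (a : Z.X → c.Y.X) : Prop :=
  ∀ z x, c.Y.ip (a z) (c.ι x) = ψ (Z.ip z (κ x))

theorem exists_isAdjoint (hM : IsVNA M) (hN : IsVNA N) (I : IsStarIsoOn M N φ ψ)
    (c : SelfDualCompletion X) (hκ : IsModHomWith φ X Z C κ) : ∃ a, c.IsAdjoint ψ κ a := by
  choose a ha _ using fun z => c.exists_ip_eq hM (hκ.isFunctionalWith_ip hN I z)
  exact ⟨a, ha⟩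

theorem IsAdjoint.isModHomWith (hM : IsVNA M) (hN : IsVNA N) (I : IsStarIsoOn M N φ ψ)
    (ha : c.IsAdjoint ψ κ a) (hκ : IsModHomWith φ X Z C κ) : IsModHomWith ψ Z c.Y C a where
  nonneg := hκ.nonneg
  map_add z w := c.ext fun x => by
    rw [ha, Z.ip_add_left, I.hom_symm.map_add _ (Z.ip_mem _ _) _ (Z.ip_mem _ _),
      c.Y.ip_add_left, ha, ha]
  map_act z b hb := c.ext fun x => by
    rw [ha, Z.ip_act_left _ _ hb, I.hom_symm.map_mul _ (hN.1 b hb) _ (Z.ip_mem _ _),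
      I.hom_symm.map_star b hb, c.Y.ip_act_left _ _ (I.mapsTo_symm hb), ha]
  modNorm_le z := by
    obtain ⟨y, hy, hyC⟩ := c.exists_ip_eq hM (hκ.isFunctionalWith_ip hN I z)
    rwa [c.ext fun x => (ha z x).trans (hy x).symm]

end SelfDualCompletion

/-- A self-dual module, as its own self-dual completion. -/
def IsSelfDual.toSelfDualCompletion {H : HilbS} {M : Set (B H)} {Y : PreHilbMod M}
    (hY : IsSelfDual Y) : SelfDualCompletion Y where
  Y := Y
  ι := id
  ι_add _ _ := rfl
  ι_smul _ _ := rfl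
  ι_act _ _ _ := rfl
  ι_ip _ _ := rfl
  selfDual := hY
  separating _ h := Y.ip_defin _ (h _)

namespace IsModHomWith

variable {H₁ H₂ : HilbS} {M : Set (B H₁)} {N : Set (B H₂)} {φ : B H₁ → B H₂} {ψ : B H₂ → B H₁}
  {X : PreHilbMod M} {Y : PreHilbMod N} {C : ℝ} {κ : X.X → Y.X}

theorem ext_ι (hM : IsVNA M) (hN : IsVNA N) (I : IsStarIsoOn M N φ ψ) {c : SelfDualCompletion X}
    {Z : PreHilbMod N} {D : ℝ} {k l : c.Y.X → Z.X} (hk : IsModHomWith φ c.Y Z C k)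
    (hl : IsModHomWith φ c.Y Z D l) (h : ∀ x, k (c.ι x) = l (c.ι x)) : k = l := by
  obtain ⟨a, ha⟩ := c.selfDual.toSelfDualCompletion.exists_isAdjoint hM hN I hk
  obtain ⟨b, hb⟩ := c.selfDual.toSelfDualCompletion.exists_isAdjoint hM hN I hl
  have hab z : a z = b z := c.ext fun x => by
    exact (ha z (c.ι x)).trans <| (congrArg (fun w => ψ (Z.ip z w)) (h x)).trans (hb z (c.ι x)).symm
  refine funext fun y => Z.ip_ext_left fun z =>
    I.right_inv.injOn (Z.ip_mem _ _) (Z.ip_mem _ _) ?_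
  rw [← ha, hab, hb]

theorem exists_extend (hM : IsVNA M) (hN : IsVNA N) (I : IsStarIsoOn M N φ ψ)
    (hκ : IsModHomWith φ X Y C κ) (c₁ : SelfDualCompletion X) (c₂ : SelfDualCompletion Y) :
    ∃ k : c₁.Y.X → c₂.Y.X, (∀ x, k (c₁.ι x) = c₂.ι (κ x)) ∧
      ∀ D, IsModHomWith φ X Y D κ → IsModHomWith φ c₁.Y c₂.Y D k := by
  have hικ {D : ℝ} (h : IsModHomWith φ X Y D κ) : IsModHomWith φ X c₂.Y D (c₂.ι ∘ κ) := by
    simpa using c₂.isModHomWith_ι.comp I.mapsTo h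
  obtain ⟨a, ha⟩ := c₁.exists_isAdjoint hM hN I (hικ hκ)
  obtain ⟨k, hk⟩ := c₂.selfDual.toSelfDualCompletion.exists_isAdjoint hN hM I.symm
    (ha.isModHomWith hM hN I (hικ hκ))
  refine ⟨k, fun x => c₂.Y.ip_ext_right fun z => ?_, fun D hD =>
    (hk.isModHomWith hN hM I.symm (ha.isModHomWith hM hN I (hικ hD) :) :)⟩
  calc c₂.Y.ip (k (c₁.ι x)) z = φ (c₁.Y.ip (c₁.ι x) (a z)) := hk _ z
    _ = φ (star (ψ (c₂.Y.ip z (c₂.ι (κ x))))) := by rw [← c₁.Y.ip_star, ha]; rfl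
    _ = c₂.Y.ip (c₂.ι (κ x)) z := by
      rw [I.hom.map_star _ (I.mapsTo_symm (c₂.Y.ip_mem _ _)), I.right_inv (c₂.Y.ip_mem _ _),
        c₂.Y.ip_star]

theorem mapNorm_eq_of_extend (hκ : IsModHomWith φ X Y C κ) {c₁ : SelfDualCompletion X}
    {c₂ : SelfDualCompletion Y} {k : c₁.Y.X → c₂.Y.X} (hkι : ∀ x, k (c₁.ι x) = c₂.ι (κ x))
    (hk : ∀ D, IsModHomWith φ X Y D κ → IsModHomWith φ c₁.Y c₂.Y D k) :
    mapNorm c₁.Y c₂.Y k = mapNorm X Y κ := by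
  refine congrArg sInf (Set.ext fun D => and_congr_right fun hD => ⟨fun h x => ?_, fun h => ?_⟩)
  · simpa only [hkι, c₁.modNorm_ι, c₂.modNorm_ι] using h (c₁.ι x)
  · exact (hk D { hκ with nonneg := hD, modNorm_le := h }).modNorm_le

theorem leftInverse_of_forall_ι (hM : IsVNA M) (I : IsStarIsoOn M N φ ψ)
    {c : SelfDualCompletion X} {Z : PreHilbMod N} {D : ℝ} {k : c.Y.X → Z.X} {l : Z.X → c.Y.X}
    (hk : IsModHomWith φ c.Y Z C k) (hl : IsModHomWith ψ Z c.Y D l)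
    (h : ∀ x, l (k (c.ι x)) = c.ι x) : Function.LeftInverse l k :=
  congr_fun <| ext_ι hM hM (.refl M)
    ((hl.comp I.mapsTo hk).congr_left fun _ hb => (I.left_inv hb).symm) .id h

theorem modNorm_eq_and_surjective_of_extend (hM : IsVNA M) (hN : IsVNA N)
    (I : IsStarIsoOn M N φ ψ) (hκ : IsModHomWith φ X Y C κ)
    (hiso : ∀ x, Y.modNorm (κ x) = X.modNorm x) (hsurj : Function.Surjective κ)
    {c₁ : SelfDualCompletion X} {c₂ : SelfDualCompletion Y} {k : c₁.Y.X → c₂.Y.X}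
    (hkι : ∀ x, k (c₁.ι x) = c₂.ι (κ x))
    (hk : ∀ D, IsModHomWith φ X Y D κ → IsModHomWith φ c₁.Y c₂.Y D k) :
    (∀ y, c₂.Y.modNorm (k y) = c₁.Y.modNorm y) ∧ Function.Surjective k := by
  obtain ⟨κ', hκ'κ, hκκ', hκ'⟩ := hκ.exists_inverse I hiso hsurj
  obtain ⟨l, hlι, hl⟩ := hκ'.exists_extend hN hM I.symm c₂ c₁
  have hk₁ : IsModHomWith φ c₁.Y c₂.Y 1 k := hk 1
    { hκ with nonneg := zero_le_one, modNorm_le := fun x => by rw [hiso, one_mul] }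
  have hl₁ : IsModHomWith ψ c₂.Y c₁.Y 1 l := hl 1 hκ'
  have hlk : Function.LeftInverse l k :=
    hk₁.leftInverse_of_forall_ι hM I hl₁ fun x => by rw [hkι, hlι, hκ'κ]
  have hkl : Function.LeftInverse k l :=
    hl₁.leftInverse_of_forall_ι hN I.symm hk₁ fun x => by rw [hlι, hkι, hκκ']
  exact ⟨hk₁.modNorm_eq_of_leftInverse hl₁ hlk, hkl.surjective⟩

end IsModHomWith

/-- Lemma 5.4, after Paschke: let `φ : B₁ → B₂` be a *-isomorphism
of von Neumann algebras, `X₁, X₂` pre-Hilbert modules over `B₁, B₂`, and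
`κ : X₁ → X₂` a bounded linear map with `κ(x b) = κ(x) φ(b)`.  Then `κ` extends to a
unique bounded (`φ`-compatible) linear map `κ̄ : X̄₁ → X̄₂` of the self-dual
completions; it satisfies `‖κ̄‖ = ‖κ‖` and `κ̄(x b) = κ̄(x) φ(b)`; and if `κ` is an
isometric surjection then so is `κ̄`. -/
theorem statement18 {Hb1 Hb2 : HilbS} (B1s : Set (B Hb1)) (B2s : Set (B Hb2))
    (hB1 : IsVNA B1s) (hB2 : IsVNA B2s)
    (h1B1 : (1 : B Hb1) ∈ B1s) (h1B2 : (1 : B Hb2) ∈ B2s)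
    (φ : B Hb1 → B Hb2) (hφ : IsStarHomOn B1s 1 1 φ)
    (hφinj : InjOn φ B1s) (hφimg : φ '' B1s = B2s)
    (X1 : PreHilbMod B1s) (X2 : PreHilbMod B2s)
    (κ : X1.X → X2.X)
    (κ_add : ∀ x y, κ (x + y) = κ x + κ y)
    (κ_smul : ∀ (c : ℂ) (x), κ (c • x) = c • κ x)
    (κ_bdd : ∃ C : ℝ, ∀ x, X2.modNorm (κ x) ≤ C * X1.modNorm x)
    (κ_mod : ∀ x, ∀ b ∈ B1s, κ (X1.act x b) = X2.act (κ x) (φ b))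
    (c1 : SelfDualCompletion X1) (c2 : SelfDualCompletion X2) :
    ∃ κb : c1.Y.X → c2.Y.X,
      ((∀ x y, κb (x + y) = κb x + κb y) ∧
       (∀ (c : ℂ) (x), κb (c • x) = c • κb x) ∧
       (∃ C : ℝ, ∀ y, c2.Y.modNorm (κb y) ≤ C * c1.Y.modNorm y) ∧
       (∀ y, ∀ b ∈ B1s, κb (c1.Y.act y b) = c2.Y.act (κb y) (φ b)) ∧
       (∀ x, κb (c1.ι x) = c2.ι (κ x)) ∧
       mapNorm c1.Y c2.Y κb = mapNorm X1 X2 κ ∧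
       (((∀ x, X2.modNorm (κ x) = X1.modNorm x) ∧ Function.Surjective κ) →
         ((∀ y, c2.Y.modNorm (κb y) = c1.Y.modNorm y) ∧ Function.Surjective κb))) ∧
      (∀ κb' : c1.Y.X → c2.Y.X,
        ((∀ x y, κb' (x + y) = κb' x + κb' y) ∧
         (∀ (c : ℂ) (x), κb' (c • x) = c • κb' x) ∧
         (∃ C : ℝ, ∀ y, c2.Y.modNorm (κb' y) ≤ C * c1.Y.modNorm y) ∧
         (∀ y, ∀ b ∈ B1s, κb' (c1.Y.act y b) = c2.Y.act (κb' y) (φ b)) ∧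
         (∀ x, κb' (c1.ι x) = c2.ι (κ x))) → κb' = κb) := by
  obtain ⟨C, hκ⟩ := IsModHomWith.exists_of_bounded κ_add κ_mod κ_bdd
  have I : IsStarIsoOn B1s B2s φ (Function.invFunOn φ B1s) :=
    hφimg ▸ hφ.isStarIsoOn_image hB1 hφinj.leftInvOn_invFunOn
  obtain ⟨k, hkι, hk⟩ := hκ.exists_extend hB1 hB2 I c1 c2
  have hkC : IsModHomWith φ c1.Y c2.Y C k := hk C hκ
  refine ⟨k, ⟨hkC.map_add, hkC.map_smul hB1 hB2 hφ, ⟨C, hkC.modNorm_le⟩, hkC.map_act, hkι,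
    hκ.mapNorm_eq_of_extend hkι hk, fun ⟨hiso, hsurj⟩ =>
      hκ.modNorm_eq_and_surjective_of_extend hB1 hB2 I hiso hsurj hkι hk⟩, ?_⟩
  rintro l ⟨l_add, -, l_bdd, l_act, hlι⟩
  obtain ⟨D, hl⟩ := IsModHomWith.exists_of_bounded l_add l_act l_bdd
  exact hl.ext_ι hB1 hB2 I hkC fun x => (hlι x).trans (hkι x).symm

end Paper
end
end
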